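/- Let (ℝ⁴, g(t)) for t ∈ [0,T), T < ∞, be a warped Berger Ricci flow with bounded curvature such that b_s ≥ 0 and H ≥ 0 hold along the flow, and suppose there are x̃₂ > 0, δ > 0, t̃ ∈ [0,T), ε > 0 and α > 0 with: c·H(x̃₂,t) ≥ δ for all t ∈ [t̃,T), c·H(x,t̃) ≥ δ for all 0 < x ≤ x̃₂, c/b ≥ ε on {0 < x ≤ x̃₂} × [t̃,T), and |c_s/c − b_s/b| ≤ α on {0 < x ≤ x̃₂} × [t̃,T). Then there exists μ > 0 such that c·H(x,t) ≥ μ for all 0 < x ≤ x̃₂ and all t ∈ [t̃,T). -/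

import Mathlib

open Set Filter Topology MeasureTheory

noncomputable section

/-- Spatial derivative with respect to arclength: `f_s = ξ⁻¹ ∂ₓ f`. -/
def dS (ξ f : ℝ → ℝ → ℝ) (x t : ℝ) : ℝ := (ξ x t)⁻¹ * deriv (fun y => f y t) x

/-- A warped Berger Ricci flow on `ℝ⁴` over `[0,T)`, described by smooth positive radial
functions `ξ, b, c` of the radial coordinate `x ∈ (0,∞)` and time `t ∈ [0,T)`,
satisfying the Ricci flow equations, completeness, the smoothness boundary conditions
at the origin of `ℝ⁴`, and the Berger ordering `c ≤ b` at `t = 0`. -/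
structure WarpedBergerFlow where
  T : ℝ
  T_pos : 0 < T
  ξ : ℝ → ℝ → ℝ
  b : ℝ → ℝ → ℝ
  c : ℝ → ℝ → ℝ
  smooth_ξ : ContDiffOn ℝ (⊤ : ℕ∞) (fun p : ℝ × ℝ => ξ p.1 p.2) (Ioi 0 ×ˢ Ico 0 T)
  smooth_b : ContDiffOn ℝ (⊤ : ℕ∞) (fun p : ℝ × ℝ => b p.1 p.2) (Ioi 0 ×ˢ Ico 0 T)
  smooth_c : ContDiffOn ℝ (⊤ : ℕ∞) (fun p : ℝ × ℝ => c p.1 p.2) (Ioi 0 ×ˢ Ico 0 T)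
  ξ_pos : ∀ x > 0, ∀ t ∈ Ico (0:ℝ) T, 0 < ξ x t
  b_pos : ∀ x > 0, ∀ t ∈ Ico (0:ℝ) T, 0 < b x t
  c_pos : ∀ x > 0, ∀ t ∈ Ico (0:ℝ) T, 0 < c x t
  /-- Ricci flow equation for `b`:
  `b_t = b_ss + (c_s/c + b_s/b) b_s + 2(c² − 2b²)/b³`. -/
  eq_b : ∀ x > 0, ∀ t ∈ Ico (0:ℝ) T,
    deriv (fun u => b x u) t =
      dS ξ (dS ξ b) x t + (dS ξ c x t / c x t + dS ξ b x t / b x t) * dS ξ b x t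
        + 2 * ((c x t) ^ 2 - 2 * (b x t) ^ 2) / (b x t) ^ 3
  /-- Ricci flow equation for `c`: `c_t = c_ss + 2 (b_s/b) c_s − 2c³/b⁴`. -/
  eq_c : ∀ x > 0, ∀ t ∈ Ico (0:ℝ) T,
    deriv (fun u => c x u) t =
      dS ξ (dS ξ c) x t + 2 * (dS ξ b x t / b x t) * dS ξ c x t
        - 2 * (c x t) ^ 3 / (b x t) ^ 4
  /-- Ricci flow equation for `ξ`: `ξ_t = −ξ (2 b_ss/b + c_ss/c)`. -/
  eq_ξ : ∀ x > 0, ∀ t ∈ Ico (0:ℝ) T,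
    deriv (fun u => ξ x u) t =
      -(ξ x t) * (2 * dS ξ (dS ξ b) x t / b x t + dS ξ (dS ξ c) x t / c x t)
  /-- Completeness: the arclength `s(x,t) = ∫₀ˣ ξ(y,t) dy` tends to `∞` as `x → ∞`. -/
  complete : ∀ t ∈ Ico (0:ℝ) T,
    Tendsto (fun x => ∫ y in (0:ℝ)..x, ξ y t) atTop atTop
  /-- Smoothness at the origin: `b → 0` as `x → 0⁺`. -/
  b_origin : ∀ t ∈ Ico (0:ℝ) T, Tendsto (fun x => b x t) (𝓝[>] 0) (𝓝 0)
  c_origin : ∀ t ∈ Ico (0:ℝ) T, Tendsto (fun x => c x t) (𝓝[>] 0) (𝓝 0)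
  /-- Smoothness at the origin: `b_s → 1` as `x → 0⁺`. -/
  bs_origin : ∀ t ∈ Ico (0:ℝ) T, Tendsto (fun x => dS ξ b x t) (𝓝[>] 0) (𝓝 1)
  cs_origin : ∀ t ∈ Ico (0:ℝ) T, Tendsto (fun x => dS ξ c x t) (𝓝[>] 0) (𝓝 1)
  /-- The Berger ordering `c ≤ b` holds at `t = 0`. -/
  ordered_init : ∀ x > 0, c x 0 ≤ b x 0

namespace WarpedBergerFlow

variable (F : WarpedBergerFlow)

/-- `b_s`. -/
def bS : ℝ → ℝ → ℝ := dS F.ξ F.b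
/-- `c_s`. -/
def cS : ℝ → ℝ → ℝ := dS F.ξ F.c
/-- `b_ss`. -/
def bSS : ℝ → ℝ → ℝ := dS F.ξ (dS F.ξ F.b)
/-- `c_ss`. -/
def cSS : ℝ → ℝ → ℝ := dS F.ξ (dS F.ξ F.c)

/-- Sectional curvature `k12 = (4b² − 3c²)/b⁴ − b_s²/b²`. -/
def k12 (x t : ℝ) : ℝ :=
  (4 * (F.b x t) ^ 2 - 3 * (F.c x t) ^ 2) / (F.b x t) ^ 4 - (F.bS x t) ^ 2 / (F.b x t) ^ 2
/-- Sectional curvature `k13 = c²/b⁴ − b_s c_s/(b c)`. -/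
def k13 (x t : ℝ) : ℝ :=
  (F.c x t) ^ 2 / (F.b x t) ^ 4 - F.bS x t * F.cS x t / (F.b x t * F.c x t)
/-- Sectional curvature `k01 = −b_ss/b`. -/
def k01 (x t : ℝ) : ℝ := -(F.bSS x t) / F.b x t
/-- Sectional curvature `k03 = −c_ss/c`. -/
def k03 (x t : ℝ) : ℝ := -(F.cSS x t) / F.c x t
/-- `|Rm| = |k12| + |k13| + |k01| + |k03|`. -/
def RmNorm (x t : ℝ) : ℝ := |F.k12 x t| + |F.k13 x t| + |F.k01 x t| + |F.k03 x t|
/-- Mean curvature of the Euclidean hypersphere of radius `x`: `H = 2 b_s/b + c_s/c`. -/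
def meanH (x t : ℝ) : ℝ := 2 * F.bS x t / F.b x t + F.cS x t / F.c x t

/-- Bounded curvature: `|Rm|` is bounded on `(0,∞) × [0,t₀]` for every `t₀ < T`. -/
def BoundedCurvature : Prop :=
  ∀ t₀ ∈ Ico (0:ℝ) F.T, ∃ C : ℝ, ∀ x > 0, ∀ t ∈ Icc (0:ℝ) t₀, F.RmNorm x t ≤ C

/-- The initial metric belongs to the class `𝒢`: at `t = 0`, `b_s ≥ 0` and `H ≥ 0`
everywhere, `b(·,0)` is bounded, and `|Rm|(·,0)` is bounded. -/
def InG : Prop :=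
  (∀ x > 0, 0 ≤ F.bS x 0) ∧ (∀ x > 0, 0 ≤ F.meanH x 0) ∧
  (∃ M : ℝ, ∀ x > 0, F.b x 0 ≤ M) ∧ (∃ C : ℝ, ∀ x > 0, F.RmNorm x 0 ≤ C)

end WarpedBergerFlow

/-!
Write `p = b_s / b` and `q = c_s / c`. The evolution of `U = c H` is
`U_t = U_ss + (3 H - 2 q) U_s + U (2 p² - 4 p q + 2 c² / b⁴) + 16 (c p / b²) (1 - c² / b²)`.
At a point where `0 ≤ U ≤ (c / b)²` one has `0 ≤ 2 p + q ≤ c / b²`, so the coefficient of `U` is at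
least `2 p² - 4 p q + 2 (2 p + q)² = 2 (p + q)² + 8 p²`; the last term is nonnegative because the
ordering `c ≤ b` persists. Since `ε² ≤ (c / b)² ≤ 1`, the lower bound `min δ ε²` survives from the
parabolic boundary, the origin being harmless because `c H → 3` there, uniformly on compact time
intervals.

The ordering itself is the maximum principle for `log (c / b)`, which is bounded above on compact
time intervals. It is applied on the ends `x ≥ a` with `a → 0`, where `H` is bounded above by the
Riccati inequality and arclength provides a barrier at infinity.
-/

/-! ### One-variable calculus -/

section Calculus

variable {f f' g g' ρ : ℝ → ℝ} {a b r s t x l m K : ℝ}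

theorem second_deriv_nonpos_of_isLocalMax (hmax : IsLocalMax f x)
    (hf : ∀ᶠ y in 𝓝 x, HasDerivAt f (f' y) y) (hf' : HasDerivAt f' l x) : l ≤ 0 := by
  by_contra! hl
  have hderiv : deriv f =ᶠ[𝓝 x] f' := hf.mono fun y hy => hy.deriv
  have hmin : IsLocalMin f x := by
    apply isLocalMin_of_deriv_deriv_pos
    · rwa [hderiv.deriv_eq, hf'.deriv]
    · exact hmax.deriv_eq_zero
    · exact hf.self_of_nhds.continuousAt
  have hconst : f =ᶠ[𝓝 x] fun _ => f x := by
    filter_upwards [hmax, hmin] with y hle hge using le_antisymm hle hge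
  have hzero : f' =ᶠ[𝓝 x] fun _ => 0 := hderiv.symm.trans (by simpa using hconst.deriv)
  exact hl.ne' (by simpa [hf'.deriv] using hzero.deriv_eq)

theorem weighted_deriv_eq_zero_and_nonpos_of_isLocalMax (hmax : IsLocalMax f x) (hρx : 0 < ρ x)
    (hρ : DifferentiableAt ℝ ρ x) (hf : ∀ᶠ y in 𝓝 x, HasDerivAt f (ρ y * g y) y)
    (hg : HasDerivAt g (ρ x * l) x) : g x = 0 ∧ l ≤ 0 := by
  have hgx : g x = 0 :=
    (mul_eq_zero.1 (hmax.hasDerivAt_eq_zero hf.self_of_nhds)).resolve_left hρx.ne'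
  have hsecond := second_deriv_nonpos_of_isLocalMax hmax hf (hρ.hasDerivAt.mul hg)
  rw [hgx, mul_zero, zero_add, ← mul_assoc] at hsecond
  exact ⟨hgx, nonpos_of_mul_nonpos_right hsecond (mul_pos hρx hρx)⟩

theorem deriv_nonneg_of_isMaxOn_left (hat : a < t) (hmax : ∀ u ∈ Icc a t, f u ≤ f t)
    (hf : HasDerivAt f l t) : 0 ≤ l := by
  have hslope : Tendsto (slope f t) (𝓝[<] t) (𝓝 l) :=
    (hasDerivAt_iff_tendsto_slope.1 hf).mono_left (nhdsWithin_mono t fun _ hu => ne_of_lt hu)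
  refine ge_of_tendsto hslope ?_
  filter_upwards [Ico_mem_nhdsLT hat] with u hu
  rw [slope_def_field]
  exact div_nonneg_of_nonpos (sub_nonpos.2 (hmax u ⟨hu.1, hu.2.le⟩)) (sub_nonpos.2 hu.2.le)

theorem abs_sub_le_mul_abs_sub_of_abs_deriv_le (hf : ContinuousOn f (Icc a b))
    (hf' : ∀ u ∈ Ioo a b, HasDerivAt f (f' u) u) (hK : ∀ u ∈ Ioo a b, |f' u| ≤ K)
    (hs : s ∈ Icc a b) (ht : t ∈ Icc a b) : |f t - f s| ≤ K * |t - s| := by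
  wlog hst : s ≤ t generalizing s t
  · rw [abs_sub_comm, abs_sub_comm t]
    exact this ht hs (le_of_not_ge hst)
  obtain rfl | hlt := hst.eq_or_lt
  · simp
  have hIoo : Ioo s t ⊆ Ioo a b := Ioo_subset_Ioo hs.1 ht.2
  obtain ⟨u, hu, hslope⟩ := exists_hasDerivAt_eq_slope f f' hlt
    (hf.mono (Icc_subset_Icc hs.1 ht.2)) fun u hu => hf' u (hIoo hu)
  have hbound := hK u (hIoo hu)
  rwa [hslope, abs_div, div_le_iff₀ (abs_pos.2 (sub_pos.2 hlt).ne')] at hbound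

theorem le_exp_mul_of_abs_log_deriv_le (hf : ContinuousOn f (Icc a b))
    (hpos : ∀ u ∈ Icc a b, 0 < f u) (hf' : ∀ u ∈ Ioo a b, HasDerivAt f (g u * f u) u)
    (hK : ∀ u ∈ Ioo a b, |g u| ≤ K) (hs : s ∈ Icc a b) (ht : t ∈ Icc a b) :
    f t ≤ Real.exp (K * |t - s|) * f s := by
  have hlog : ∀ u ∈ Ioo a b, HasDerivAt (fun v => Real.log (f v)) (g u) u := fun u hu => by
    have hfu := (hpos u (Ioo_subset_Icc_self hu)).ne'
    simpa [hfu] using (hf' u hu).log hfu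
  have hbound := abs_sub_le_mul_abs_sub_of_abs_deriv_le
    (hf.log fun u hu => (hpos u hu).ne') hlog hK hs ht
  have hfs := hpos s hs
  rw [← Real.log_le_log_iff (hpos t ht) (by positivity), Real.log_mul (by positivity) hfs.ne',
    Real.log_exp]
  linarith [le_abs_self (Real.log (f t) - Real.log (f s))]

theorem le_of_tendsto_nhdsGT_of_deriv_nonneg (hf : ∀ y ∈ Ioo a r, HasDerivAt f (f' y) y)
    (hf' : ∀ y ∈ Ioo a r, 0 ≤ f' y) (hl : Tendsto f (𝓝[>] a) (𝓝 l)) (hx : x ∈ Ioo a r) :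
    l ≤ f x := by
  have hmono : MonotoneOn f (Ioo a r) := by
    refine monotoneOn_of_hasDerivWithinAt_nonneg (f' := f') (convex_Ioo a r)
      (fun y hy => (hf y hy).continuousAt.continuousWithinAt) ?_ ?_
    · rw [interior_Ioo]
      exact fun y hy => (hf y hy).hasDerivWithinAt
    · rwa [interior_Ioo]
  refine le_of_tendsto hl ?_
  filter_upwards [Ioo_mem_nhdsGT hx.1] with y hy
  exact hmono ⟨hy.1, hy.2.trans hx.2⟩ hx hy.2.le

theorem abs_sub_le_sub_of_abs_deriv_le_deriv (hf : ∀ y ∈ Ioo a r, HasDerivAt f (f' y) y)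
    (hg : ∀ y ∈ Ioo a r, HasDerivAt g (g' y) y) (hle : ∀ y ∈ Ioo a r, |f' y| ≤ g' y)
    (hl : Tendsto f (𝓝[>] a) (𝓝 l)) (hm : Tendsto g (𝓝[>] a) (𝓝 m)) (hx : x ∈ Ioo a r) :
    |f x - l| ≤ g x - m := by
  have hadd : m + l ≤ g x + f x :=
    le_of_tendsto_nhdsGT_of_deriv_nonneg (f := g + f) (fun y hy => (hg y hy).add (hf y hy))
      (fun y hy => by linarith [(abs_le.1 (hle y hy)).1]) (hm.add hl) hx
  have hsub : m - l ≤ g x - f x :=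
    le_of_tendsto_nhdsGT_of_deriv_nonneg (f := g - f) (fun y hy => (hg y hy).sub (hf y hy))
      (fun y hy => by linarith [(abs_le.1 (hle y hy)).2]) (hm.sub hl) hx
  exact abs_le.2 ⟨by linarith, by linarith⟩

end Calculus

/-! ### Functions of space and time -/

section SpaceTime

variable {f : ℝ → ℝ → ℝ} {a X x t t₀ t₁ : ℝ}

/-- The maximum principle: at the first time `f` reaches `0`, it touches `0` from below. -/
theorem neg_of_forall_not_touching
    (hf : ContinuousOn (fun p : ℝ × ℝ => f p.1 p.2) (Icc a X ×ˢ Icc t₀ t₁))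
    (hleft : ∀ t ∈ Icc t₀ t₁, f a t < 0) (hright : ∀ t ∈ Icc t₀ t₁, f X t < 0)
    (hinit : ∀ x ∈ Icc a X, f x t₀ < 0)
    (htouch : ∀ y ∈ Ioo a X, ∀ s ∈ Ioc t₀ t₁, f y s = 0 → IsLocalMax (fun z => f z s) y →
      ¬ ∀ u ∈ Icc t₀ s, f y u ≤ 0) (hx : x ∈ Icc a X) (ht : t ∈ Icc t₀ t₁) : f x t < 0 := by
  by_contra! hbad
  have hcompact : IsCompact ((Icc a X ×ˢ Icc t₀ t₁) ∩ (fun p : ℝ × ℝ => f p.1 p.2) ⁻¹' Ici 0) :=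
    (isCompact_Icc.prod isCompact_Icc).of_isClosed_subset
      (hf.preimage_isClosed_of_isClosed (isClosed_Icc.prod isClosed_Icc) isClosed_Ici)
      inter_subset_left
  obtain ⟨⟨y, s⟩, ⟨⟨hy, hs⟩, hys⟩, hfirst⟩ :=
    hcompact.exists_isMinOn ⟨(x, t), ⟨hx, ht⟩, hbad⟩ continuous_snd.continuousOn
  have hys : 0 ≤ f y s := hys
  have hts : t₀ < s := hs.1.lt_of_ne fun h => (hinit y hy).not_ge (h ▸ hys)
  have hbefore : ∀ z ∈ Icc a X, ∀ u ∈ Ico t₀ s, f z u < 0 := fun z hz u hu => by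
    by_contra! hzu
    exact hu.2.not_ge (isMinOn_iff.1 hfirst (z, u) ⟨⟨hz, hu.1, hu.2.le.trans hs.2⟩, hzu⟩)
  have hat : ∀ z ∈ Icc a X, f z s ≤ 0 := fun z hz => by
    have hcont : ContinuousWithinAt (f z) (Ico t₀ s) s :=
      (hf (z, s) ⟨hz, hs⟩).comp (f := fun u => (z, u)) (t := Icc a X ×ˢ Icc t₀ t₁) (by fun_prop)
        fun u hu => ⟨hz, hu.1, hu.2.le.trans hs.2⟩
    exact hcont.closure_le (by rw [closure_Ico hts.ne]; exact ⟨hts.le, le_rfl⟩)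
      continuousWithinAt_const fun u hu => (hbefore z hz u hu).le
  have hya : a < y := hy.1.lt_of_ne fun h => (hleft s hs).not_ge (h ▸ hys)
  have hyX : y < X := hy.2.lt_of_ne fun h => (hright s hs).not_ge (h ▸ hys)
  have hzero : f y s = 0 := (hat y hy).antisymm hys
  refine htouch y ⟨hya, hyX⟩ s ⟨hts, hs.2⟩ hzero ?_ fun u hu => ?_
  · filter_upwards [Icc_mem_nhds hya hyX] with z hz
    exact hzero ▸ hat z hz
  · exact hu.2.eq_or_lt.elim (fun h => h ▸ hat y hy) fun h => (hbefore y hy u ⟨hu.1, h⟩).le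

theorem hasDerivAt_fst_of_differentiableAt
    (hf : DifferentiableAt ℝ (fun p : ℝ × ℝ => f p.1 p.2) (x, t)) :
    HasDerivAt (fun y => f y t) (fderiv ℝ (fun p : ℝ × ℝ => f p.1 p.2) (x, t) (1, 0)) x :=
  hf.hasFDerivAt.comp_hasDerivAt (f := fun y => (y, t)) x
    ((hasDerivAt_id x).prodMk (hasDerivAt_const x t))

theorem hasDerivAt_snd_of_differentiableAt
    (hf : DifferentiableAt ℝ (fun p : ℝ × ℝ => f p.1 p.2) (x, t)) :
    HasDerivAt (fun u => f x u) (fderiv ℝ (fun p : ℝ × ℝ => f p.1 p.2) (x, t) (0, 1)) t :=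
  hf.hasFDerivAt.comp_hasDerivAt (f := fun u => (x, u)) t
    ((hasDerivAt_const t x).prodMk (hasDerivAt_id t))

theorem deriv_deriv_comm_of_contDiffAt
    (hf : ContDiffAt ℝ 2 (fun p : ℝ × ℝ => f p.1 p.2) (x, t)) :
    deriv (fun u => deriv (fun y => f y u) x) t = deriv (fun y => deriv (fun u => f y u) t) x := by
  set φ : ℝ × ℝ → ℝ := fun p => f p.1 p.2
  have hdiff : ∀ᶠ p in 𝓝 (x, t), DifferentiableAt ℝ φ p :=
    (hf.eventually (by simp)).mono fun p hp => hp.differentiableAt (by simp)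
  have hspace : (fun u => deriv (fun y => f y u) x) =ᶠ[𝓝 t] fun u => fderiv ℝ φ (x, u) (1, 0) :=
    ((Continuous.prodMk_right x).continuousAt.eventually hdiff).mono fun u hu =>
      (hasDerivAt_fst_of_differentiableAt hu).deriv
  have htime : (fun y => deriv (fun u => f y u) t) =ᶠ[𝓝 x] fun y => fderiv ℝ φ (y, t) (0, 1) :=
    ((Continuous.prodMk_left t).continuousAt.eventually hdiff).mono fun y hy =>
      (hasDerivAt_snd_of_differentiableAt hy).deriv
  have hφ' : HasFDerivAt (fderiv ℝ φ) (fderiv ℝ (fderiv ℝ φ) (x, t)) (x, t) :=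
    ((hf.fderiv_right (m := 1) (by norm_num)).differentiableAt (by simp)).hasFDerivAt
  have hts : HasDerivAt (fun u => fderiv ℝ φ (x, u) (1, 0))
      (fderiv ℝ (fderiv ℝ φ) (x, t) (0, 1) (1, 0)) t := by
    simpa using (hφ'.comp_hasDerivAt (f := fun u => (x, u)) t
      ((hasDerivAt_const t x).prodMk (hasDerivAt_id t))).clm_apply (hasDerivAt_const t (1, 0))
  have hst : HasDerivAt (fun y => fderiv ℝ φ (y, t) (0, 1))
      (fderiv ℝ (fderiv ℝ φ) (x, t) (1, 0) (0, 1)) x := by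
    simpa using (hφ'.comp_hasDerivAt (f := fun y => (y, t)) x
      ((hasDerivAt_id x).prodMk (hasDerivAt_const x t))).clm_apply (hasDerivAt_const x (0, 1))
  rw [hspace.deriv_eq, htime.deriv_eq, hts.deriv, hst.deriv]
  exact (hf.isSymmSndFDerivAt (by simp)).eq (0, 1) (1, 0)

end SpaceTime

/-- Smoothness of a function of `(x, t)` on the domain `(0, ∞) × [0, T)` of the flow, up to and
including the initial time. -/
def SpacetimeSmooth (T : ℝ) (f : ℝ → ℝ → ℝ) : Prop :=
  ContDiffOn ℝ (⊤ : ℕ∞) (fun p : ℝ × ℝ => f p.1 p.2) (Ioi 0 ×ˢ Ico 0 T)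

namespace SpacetimeSmooth

variable {T t t₀ x k : ℝ} {f g : ℝ → ℝ → ℝ}

theorem contDiffAt (hf : SpacetimeSmooth T f) (hx : 0 < x) (ht : t ∈ Ioo 0 T) :
    ContDiffAt ℝ (⊤ : ℕ∞) (fun p : ℝ × ℝ => f p.1 p.2) (x, t) :=
  ContDiffOn.contDiffAt hf (prod_mem_nhds (Ioi_mem_nhds hx) (Ico_mem_nhds ht.1 ht.2))

theorem hasDerivAt_space_fderivWithin (hf : SpacetimeSmooth T f) (hx : 0 < x)
    (ht : t ∈ Ico 0 T) : HasDerivAt (fun y => f y t)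
      (fderivWithin ℝ (fun p : ℝ × ℝ => f p.1 p.2) (Ioi 0 ×ˢ Ico 0 T) (x, t) (1, 0)) x := by
  have hfderiv := (hf.differentiableOn (by simp) (x, t) ⟨hx, ht⟩).hasFDerivWithinAt
  have hline : HasDerivWithinAt (fun y : ℝ => (y, t)) (1, 0) (Ioi 0) x :=
    ((hasDerivAt_id x).prodMk (hasDerivAt_const x t)).hasDerivWithinAt
  exact (hfderiv.comp_hasDerivWithinAt (t := Ioi 0 ×ˢ Ico 0 T) x hline
    fun y hy => ⟨hy, ht⟩).hasDerivAt (Ioi_mem_nhds hx)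

theorem hasDerivAt_space (hf : SpacetimeSmooth T f) (hx : 0 < x) (ht : t ∈ Ico 0 T) :
    HasDerivAt (fun y => f y t) (deriv (fun y => f y t) x) x :=
  (hf.hasDerivAt_space_fderivWithin hx ht).differentiableAt.hasDerivAt

theorem hasDerivAt_time (hf : SpacetimeSmooth T f) (hx : 0 < x) (ht : t ∈ Ioo 0 T) :
    HasDerivAt (fun u => f x u) (deriv (fun u => f x u) t) t :=
  (hasDerivAt_snd_of_differentiableAt
    ((hf.contDiffAt hx ht).differentiableAt (by simp))).differentiableAt.hasDerivAt

theorem deriv_space (hf : SpacetimeSmooth T f) :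
    SpacetimeSmooth T fun x t => deriv (fun y => f y t) x := by
  have hunique : UniqueDiffOn ℝ (Ioi 0 ×ˢ Ico 0 T : Set (ℝ × ℝ)) :=
    (uniqueDiffOn_Ioi 0).prod (uniqueDiffOn_Ico 0 T)
  have hfderiv := (hf.fderivWithin (m := (⊤ : ℕ∞)) hunique (by simp)).clm_apply
    (contDiffOn_const (c := ((1 : ℝ), (0 : ℝ))))
  exact hfderiv.congr fun p hp => (hf.hasDerivAt_space_fderivWithin hp.1 hp.2).deriv

theorem add (hf : SpacetimeSmooth T f) (hg : SpacetimeSmooth T g) :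
    SpacetimeSmooth T fun x t => f x t + g x t :=
  ContDiffOn.add hf hg

theorem mul (hf : SpacetimeSmooth T f) (hg : SpacetimeSmooth T g) :
    SpacetimeSmooth T fun x t => f x t * g x t :=
  ContDiffOn.mul hf hg

theorem const_mul (hf : SpacetimeSmooth T f) : SpacetimeSmooth T fun x t => k * f x t :=
  ContDiffOn.mul contDiffOn_const hf

theorem div (hf : SpacetimeSmooth T f) (hg : SpacetimeSmooth T g)
    (hpos : ∀ x > 0, ∀ t ∈ Ico (0 : ℝ) T, 0 < g x t) :
    SpacetimeSmooth T fun x t => f x t / g x t :=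
  ContDiffOn.div hf hg fun p hp => (hpos p.1 hp.1 p.2 hp.2).ne'

theorem log (hf : SpacetimeSmooth T f) (hpos : ∀ x > 0, ∀ t ∈ Ico (0 : ℝ) T, 0 < f x t) :
    SpacetimeSmooth T fun x t => Real.log (f x t) :=
  ContDiffOn.log hf fun p hp => (hpos p.1 hp.1 p.2 hp.2).ne'

theorem continuousOn_space (hf : SpacetimeSmooth T f) (ht : t ∈ Ico 0 T) :
    ContinuousOn (fun y => f y t) (Ioi 0) :=
  hf.continuousOn.comp (f := fun y : ℝ => (y, t)) (by fun_prop) fun _ hy => ⟨hy, ht⟩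

theorem continuousOn_time (hf : SpacetimeSmooth T f) (hx : 0 < x) (ht₀ : t₀ < T) :
    ContinuousOn (fun u => f x u) (Icc 0 t₀) :=
  hf.continuousOn.comp (f := fun u : ℝ => (x, u)) (by fun_prop)
    fun _ hu => ⟨hx, hu.1, hu.2.trans_lt ht₀⟩

end SpacetimeSmooth

namespace WarpedBergerFlow

variable (F : WarpedBergerFlow) {f : ℝ → ℝ → ℝ} {x t t₀ l C : ℝ}

/-! ### Arclength derivatives and evolution of the metric coefficients -/

theorem smooth_dS (hf : SpacetimeSmooth F.T f) : SpacetimeSmooth F.T (dS F.ξ f) :=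
  (ContDiffOn.inv F.smooth_ξ fun p hp => (F.ξ_pos p.1 hp.1 p.2 hp.2).ne').mul hf.deriv_space

theorem smooth_bS : SpacetimeSmooth F.T F.bS := F.smooth_dS F.smooth_b

theorem smooth_cS : SpacetimeSmooth F.T F.cS := F.smooth_dS F.smooth_c

theorem smooth_meanH : SpacetimeSmooth F.T F.meanH :=
  (F.smooth_bS.const_mul.div F.smooth_b F.b_pos).add (F.smooth_cS.div F.smooth_c F.c_pos)

theorem hasDerivAt_space (hf : SpacetimeSmooth F.T f) (hx : 0 < x) (ht : t ∈ Ico 0 F.T) :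
    HasDerivAt (fun y => f y t) (F.ξ x t * dS F.ξ f x t) x := by
  rw [dS, mul_inv_cancel_left₀ (F.ξ_pos x hx t ht).ne']
  exact hf.hasDerivAt_space hx ht

theorem dS_eq_of_hasDerivAt (hx : 0 < x) (ht : t ∈ Ico 0 F.T)
    (hf : HasDerivAt (fun y => f y t) (F.ξ x t * l) x) : dS F.ξ f x t = l := by
  rw [dS, hf.deriv, inv_mul_cancel_left₀ (F.ξ_pos x hx t ht).ne']

theorem hasDerivAt_space_b (hx : 0 < x) (ht : t ∈ Ico 0 F.T) :
    HasDerivAt (fun y => F.b y t) (F.ξ x t * F.bS x t) x :=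
  F.hasDerivAt_space F.smooth_b hx ht

theorem hasDerivAt_space_c (hx : 0 < x) (ht : t ∈ Ico 0 F.T) :
    HasDerivAt (fun y => F.c y t) (F.ξ x t * F.cS x t) x :=
  F.hasDerivAt_space F.smooth_c hx ht

theorem bSS_eq (hx : 0 < x) (ht : t ∈ Ico 0 F.T) : F.bSS x t = -F.k01 x t * F.b x t := by
  rw [k01, neg_div, neg_neg, div_mul_cancel₀ _ (F.b_pos x hx t ht).ne']

theorem cSS_eq (hx : 0 < x) (ht : t ∈ Ico 0 F.T) : F.cSS x t = -F.k03 x t * F.c x t := by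
  rw [k03, neg_div, neg_neg, div_mul_cancel₀ _ (F.c_pos x hx t ht).ne']

theorem hasDerivAt_space_bS (hx : 0 < x) (ht : t ∈ Ico 0 F.T) :
    HasDerivAt (fun y => F.bS y t) (F.ξ x t * (-F.k01 x t * F.b x t)) x :=
  F.bSS_eq hx ht ▸ F.hasDerivAt_space F.smooth_bS hx ht

theorem hasDerivAt_space_cS (hx : 0 < x) (ht : t ∈ Ico 0 F.T) :
    HasDerivAt (fun y => F.cS y t) (F.ξ x t * (-F.k03 x t * F.c x t)) x :=
  F.cSS_eq hx ht ▸ F.hasDerivAt_space F.smooth_cS hx ht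

theorem hasDerivAt_time_b (hx : 0 < x) (ht : t ∈ Ioo 0 F.T) :
    HasDerivAt (fun u => F.b x u) (-(F.k01 x t + F.k12 x t + F.k13 x t) * F.b x t) t := by
  have ht' : t ∈ Ico 0 F.T := Ioo_subset_Ico_self ht
  have hb := (F.b_pos x hx t ht').ne'
  have hc := (F.c_pos x hx t ht').ne'
  convert SpacetimeSmooth.hasDerivAt_time F.smooth_b hx ht using 1
  rw [F.eq_b x hx t ht']
  change _ = F.bSS x t + (F.cS x t / F.c x t + F.bS x t / F.b x t) * F.bS x t + _
  rw [F.bSS_eq hx ht', k12, k13]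
  field_simp
  ring

theorem hasDerivAt_time_c (hx : 0 < x) (ht : t ∈ Ioo 0 F.T) :
    HasDerivAt (fun u => F.c x u) (-(F.k03 x t + 2 * F.k13 x t) * F.c x t) t := by
  have ht' : t ∈ Ico 0 F.T := Ioo_subset_Ico_self ht
  have hb := (F.b_pos x hx t ht').ne'
  have hc := (F.c_pos x hx t ht').ne'
  convert SpacetimeSmooth.hasDerivAt_time F.smooth_c hx ht using 1
  rw [F.eq_c x hx t ht']
  change _ = F.cSS x t + 2 * (F.bS x t / F.b x t) * F.cS x t - _
  rw [F.cSS_eq hx ht', k13]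
  field_simp
  ring

theorem hasDerivAt_time_ξ (hx : 0 < x) (ht : t ∈ Ioo 0 F.T) :
    HasDerivAt (fun u => F.ξ x u) ((2 * F.k01 x t + F.k03 x t) * F.ξ x t) t := by
  have ht' : t ∈ Ico 0 F.T := Ioo_subset_Ico_self ht
  convert SpacetimeSmooth.hasDerivAt_time F.smooth_ξ hx ht using 1
  rw [F.eq_ξ x hx t ht']
  change _ = -F.ξ x t * (2 * F.bSS x t / F.b x t + F.cSS x t / F.c x t)
  rw [k01, k03]
  ring

/-- The commutator `[∂ₜ, ∂ₛ]`, coming from the evolution of `ξ`. -/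
theorem hasDerivAt_time_dS {ft : ℝ → ℝ} (hf : SpacetimeSmooth F.T f) (hx : 0 < x)
    (ht : t ∈ Ioo 0 F.T) (hft : ∀ y > 0, HasDerivAt (fun u => f y u) (ft y) t)
    (hl : HasDerivAt ft (F.ξ x t * l) x) :
    HasDerivAt (fun u => dS F.ξ f x u)
      (l - (2 * F.k01 x t + F.k03 x t) * dS F.ξ f x t) t := by
  have hξ := (F.ξ_pos x hx t (Ioo_subset_Ico_self ht)).ne'
  have hcomm : deriv (fun u => deriv (fun y => f y u) x) t = F.ξ x t * l := by
    have htime : (fun y => deriv (fun u => f y u) t) =ᶠ[𝓝 x] ft :=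
      (eventually_gt_nhds hx).mono fun y hy => (hft y hy).deriv
    rw [deriv_deriv_comm_of_contDiffAt ((hf.contDiffAt hx ht).of_le (by norm_cast)),
      htime.deriv_eq, hl.deriv]
  refine (((F.hasDerivAt_time_ξ hx ht).inv hξ).mul
    (hf.deriv_space.hasDerivAt_time hx ht)).congr_deriv ?_
  rw [hcomm, dS, Pi.inv_apply]
  field_simp
  ring

/-! ### Consequences of a curvature bound on a compact time interval -/

theorem RmNorm_nonneg : 0 ≤ F.RmNorm x t := by
  rw [RmNorm]
  positivity

theorem abs_k01_le_RmNorm : |F.k01 x t| ≤ F.RmNorm x t := by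
  rw [RmNorm]
  linarith [abs_nonneg (F.k12 x t), abs_nonneg (F.k13 x t), abs_nonneg (F.k03 x t)]

theorem abs_k03_le_RmNorm : |F.k03 x t| ≤ F.RmNorm x t := by
  rw [RmNorm]
  linarith [abs_nonneg (F.k12 x t), abs_nonneg (F.k13 x t), abs_nonneg (F.k01 x t)]

theorem abs_k01_add_k12_add_k13_le : |F.k01 x t + F.k12 x t + F.k13 x t| ≤ 2 * F.RmNorm x t := by
  rw [RmNorm]
  linarith [abs_add_three (F.k01 x t) (F.k12 x t) (F.k13 x t), abs_nonneg (F.k01 x t),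
    abs_nonneg (F.k12 x t), abs_nonneg (F.k13 x t), abs_nonneg (F.k03 x t)]

theorem abs_k03_add_two_mul_k13_le : |F.k03 x t + 2 * F.k13 x t| ≤ 2 * F.RmNorm x t := by
  rw [RmNorm, two_mul (F.k13 x t), ← add_assoc]
  linarith [abs_add_three (F.k03 x t) (F.k13 x t) (F.k13 x t), abs_nonneg (F.k12 x t),
    abs_nonneg (F.k01 x t), abs_nonneg (F.k03 x t)]

theorem abs_two_mul_k01_add_k03_le : |2 * F.k01 x t + F.k03 x t| ≤ 2 * F.RmNorm x t := by
  rw [RmNorm, two_mul (F.k01 x t)]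
  linarith [abs_add_three (F.k01 x t) (F.k01 x t) (F.k03 x t), abs_nonneg (F.k12 x t),
    abs_nonneg (F.k13 x t), abs_nonneg (F.k03 x t)]

section CurvatureBound

variable {F} {y s : ℝ} (ht₀ : t₀ < F.T) (hRm : ∀ x > 0, ∀ t ∈ Icc 0 t₀, F.RmNorm x t ≤ C)

include ht₀ hRm

theorem le_exp_mul_of_abs_log_deriv_le_RmNorm {ρ : ℝ → ℝ} (hf : SpacetimeSmooth F.T f)
    (hpos : ∀ x > 0, ∀ t ∈ Ico 0 F.T, 0 < f x t) (hx : 0 < x)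
    (hft : ∀ t ∈ Ioo 0 F.T, HasDerivAt (fun u => f x u) (ρ t * f x t) t)
    (hρ : ∀ t, |ρ t| ≤ 2 * F.RmNorm x t) (hs : s ∈ Icc 0 t₀) (ht : t ∈ Icc 0 t₀) :
    f x t ≤ Real.exp (2 * C * |t - s|) * f x s := by
  refine le_exp_mul_of_abs_log_deriv_le (hf.continuousOn_time hx ht₀)
    (fun u hu => hpos x hx u ⟨hu.1, hu.2.trans_lt ht₀⟩)
    (fun u hu => hft u ⟨hu.1, hu.2.trans ht₀⟩) (fun u hu => (hρ u).trans ?_) hs ht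
  linarith [hRm x hx u (Ioo_subset_Icc_self hu)]

theorem b_le_exp_mul (hx : 0 < x) (hs : s ∈ Icc 0 t₀) (ht : t ∈ Icc 0 t₀) :
    F.b x t ≤ Real.exp (2 * C * |t - s|) * F.b x s :=
  le_exp_mul_of_abs_log_deriv_le_RmNorm ht₀ hRm F.smooth_b F.b_pos hx
    (fun _ hu => F.hasDerivAt_time_b hx hu)
    (fun _ => (abs_neg _).trans_le F.abs_k01_add_k12_add_k13_le) hs ht

theorem c_le_exp_mul (hx : 0 < x) (hs : s ∈ Icc 0 t₀) (ht : t ∈ Icc 0 t₀) :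
    F.c x t ≤ Real.exp (2 * C * |t - s|) * F.c x s :=
  le_exp_mul_of_abs_log_deriv_le_RmNorm ht₀ hRm F.smooth_c F.c_pos hx
    (fun _ hu => F.hasDerivAt_time_c hx hu)
    (fun _ => (abs_neg _).trans_le F.abs_k03_add_two_mul_k13_le) hs ht

theorem ξ_le_exp_mul (hx : 0 < x) (hs : s ∈ Icc 0 t₀) (ht : t ∈ Icc 0 t₀) :
    F.ξ x t ≤ Real.exp (2 * C * |t - s|) * F.ξ x s :=
  le_exp_mul_of_abs_log_deriv_le_RmNorm ht₀ hRm F.smooth_ξ F.ξ_pos hx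
    (fun _ hu => F.hasDerivAt_time_ξ hx hu) (fun _ => F.abs_two_mul_k01_add_k03_le) hs ht

end CurvatureBound

end WarpedBergerFlow

namespace WarpedBergerFlow

variable {F : WarpedBergerFlow} {f : ℝ → ℝ → ℝ} {a x t t₀ η C K : ℝ}

/-! ### Uniform asymptotics at the origin -/

/-- The hypothesis bounds `f_ss ds` at all times by the initial data; since `f_s` is close to `1`
initially, the right-hand side is at most the differential of `K f²` at time `0`. -/
theorem eventually_abs_dS_sub_one_le (hf : SpacetimeSmooth F.T f)
    (hzero : Tendsto (fun x => f x 0) (𝓝[>] 0) (𝓝 0))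
    (hone : ∀ t ∈ Ico 0 F.T, Tendsto (fun x => dS F.ξ f x t) (𝓝[>] 0) (𝓝 1)) (ht₀ : t₀ < F.T)
    (hss : ∀ x > 0, ∀ t ∈ Icc 0 t₀,
      |F.ξ x t * dS F.ξ (dS F.ξ f) x t| ≤ K * (F.ξ x 0 * f x 0)) (hη : 0 < η) :
    ∀ᶠ x in 𝓝[>] 0, ∀ t ∈ Icc 0 t₀, |dS F.ξ f x t - 1| ≤ η := by
  have h0 : (0 : ℝ) ∈ Ico 0 F.T := ⟨le_rfl, F.T_pos⟩
  have hsq : Tendsto (fun x => K * f x 0 ^ 2) (𝓝[>] 0) (𝓝 0) := by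
    simpa using (hzero.pow 2).const_mul K
  obtain ⟨r, hr, hhalf⟩ := mem_nhdsGT_iff_exists_Ioo_subset.1
    ((hone 0 h0).eventually (lt_mem_nhds (show (1 / 2 : ℝ) < 1 by norm_num)))
  filter_upwards [Ioo_mem_nhdsGT hr, hsq.eventually (gt_mem_nhds hη)] with x hx hxη t ht
  have ht' : t ∈ Ico 0 F.T := ⟨ht.1, ht.2.trans_lt ht₀⟩
  have hle : ∀ y ∈ Ioo 0 r, |F.ξ y t * dS F.ξ (dS F.ξ f) y t| ≤
      K * (2 * f y 0 ^ 1 * (F.ξ y 0 * dS F.ξ f y 0)) := fun y hy => by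
    have hy2 : 1 ≤ 2 * dS F.ξ f y 0 := by linarith [show 1 / 2 < dS F.ξ f y 0 from hhalf hy]
    have hss' := hss y hy.1 t ht
    calc _ ≤ K * (F.ξ y 0 * f y 0) := hss'
      _ ≤ K * (F.ξ y 0 * f y 0) * (2 * dS F.ξ f y 0) :=
        le_mul_of_one_le_right ((abs_nonneg _).trans hss') hy2
      _ = _ := by ring
  have hbound : |dS F.ξ f x t - 1| ≤ K * f x 0 ^ 2 - 0 := abs_sub_le_sub_of_abs_deriv_le_deriv
    (fun y hy => F.hasDerivAt_space (F.smooth_dS hf) hy.1 ht')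
    (fun y hy => ((F.hasDerivAt_space hf hy.1 h0).pow 2).const_mul K) hle (hone t ht') hsq hx
  exact hbound.trans (by linarith)

section CurvatureBound

variable (ht₀ : t₀ ∈ Ico 0 F.T) (hRm : ∀ x > 0, ∀ t ∈ Icc 0 t₀, F.RmNorm x t ≤ C)

include ht₀ hRm

theorem abs_ξ_mul_le_of_le_exp_mul {k u u₀ : ℝ} (hx : 0 < x) (ht : t ∈ Icc 0 t₀)
    (hk : |k| ≤ F.RmNorm x t) (hu : 0 < u) (hu₀ : u ≤ Real.exp (2 * C * |t - 0|) * u₀) :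
    |F.ξ x t * (-k * u)| ≤ C * Real.exp (2 * C * t₀) ^ 2 * (F.ξ x 0 * u₀) := by
  have h0 : (0 : ℝ) ∈ Icc 0 t₀ := ⟨le_rfl, ht₀.1⟩
  have hkC : |k| ≤ C := hk.trans (hRm x hx t ht)
  have hC : 0 ≤ C := (abs_nonneg k).trans hkC
  have hξ := F.ξ_pos x hx t ⟨ht.1, ht.2.trans_lt ht₀.2⟩
  have hexp : Real.exp (2 * C * |t - 0|) ≤ Real.exp (2 * C * t₀) := by
    rw [sub_zero, abs_of_nonneg ht.1]
    gcongr
    exact ht.2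
  have hu₀_pos : 0 < u₀ := pos_of_mul_pos_right (hu.trans_le hu₀) (Real.exp_pos _).le
  have hξ₀ := F.ξ_pos x hx 0 ⟨le_rfl, F.T_pos⟩
  calc |F.ξ x t * (-k * u)| = F.ξ x t * (|k| * u) := by
        rw [abs_mul, abs_mul, abs_neg, abs_of_pos hξ, abs_of_pos hu]
    _ ≤ (Real.exp (2 * C * t₀) * F.ξ x 0) * (C * (Real.exp (2 * C * t₀) * u₀)) := by
        gcongr
        · exact (ξ_le_exp_mul ht₀.2 hRm hx h0 ht).trans (by gcongr)
        · exact hu₀.trans (by gcongr)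
    _ = _ := by ring

theorem eventually_abs_bS_sub_one_le (hη : 0 < η) :
    ∀ᶠ x in 𝓝[>] 0, ∀ t ∈ Icc 0 t₀, |F.bS x t - 1| ≤ η := by
  refine eventually_abs_dS_sub_one_le (K := C * Real.exp (2 * C * t₀) ^ 2) F.smooth_b
    (F.b_origin 0 ⟨le_rfl, F.T_pos⟩) F.bs_origin ht₀.2 (fun x hx t ht => ?_) hη
  have ht' : t ∈ Ico 0 F.T := ⟨ht.1, ht.2.trans_lt ht₀.2⟩
  change |F.ξ x t * F.bSS x t| ≤ _
  rw [F.bSS_eq hx ht']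
  exact abs_ξ_mul_le_of_le_exp_mul ht₀ hRm hx ht F.abs_k01_le_RmNorm (F.b_pos x hx t ht')
    (b_le_exp_mul ht₀.2 hRm hx ⟨le_rfl, ht₀.1⟩ ht)

theorem eventually_abs_cS_sub_one_le (hη : 0 < η) :
    ∀ᶠ x in 𝓝[>] 0, ∀ t ∈ Icc 0 t₀, |F.cS x t - 1| ≤ η := by
  refine eventually_abs_dS_sub_one_le (K := C * Real.exp (2 * C * t₀) ^ 2) F.smooth_c
    (F.c_origin 0 ⟨le_rfl, F.T_pos⟩) F.cs_origin ht₀.2 (fun x hx t ht => ?_) hη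
  have ht' : t ∈ Ico 0 F.T := ⟨ht.1, ht.2.trans_lt ht₀.2⟩
  change |F.ξ x t * F.cSS x t| ≤ _
  rw [F.cSS_eq hx ht']
  exact abs_ξ_mul_le_of_le_exp_mul ht₀ hRm hx ht F.abs_k03_le_RmNorm (F.c_pos x hx t ht')
    (c_le_exp_mul ht₀.2 hRm hx ⟨le_rfl, ht₀.1⟩ ht)

theorem eventually_abs_c_sub_b_le (hη : 0 < η) :
    ∀ᶠ x in 𝓝[>] 0, ∀ t ∈ Icc 0 t₀, |F.c x t - F.b x t| ≤ η * F.b x t := by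
  have hη' : 0 < min (1 / 2) (η / 4) := by positivity
  obtain ⟨r, hr, hnear⟩ := mem_nhdsGT_iff_exists_Ioo_subset.1
    ((eventually_abs_bS_sub_one_le ht₀ hRm hη').and (eventually_abs_cS_sub_one_le ht₀ hRm hη'))
  filter_upwards [Ioo_mem_nhdsGT hr] with x hx t ht
  have ht' : t ∈ Ico 0 F.T := ⟨ht.1, ht.2.trans_lt ht₀.2⟩
  have hle : ∀ y ∈ Ioo 0 r, |F.ξ y t * F.cS y t - F.ξ y t * F.bS y t| ≤
      η * (F.ξ y t * F.bS y t) := fun y hy => by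
    have hξ := F.ξ_pos y hy.1 t ht'
    have hb := abs_le.1 ((hnear hy).1 t ht)
    have hc := abs_le.1 ((hnear hy).2 t ht)
    have hhalf := min_le_left (1 / 2) (η / 4)
    have hquarter := min_le_right (1 / 2) (η / 4)
    have hcb : |F.cS y t - F.bS y t| ≤ η * F.bS y t := by
      have hηb : η * (1 / 2) ≤ η * F.bS y t := by gcongr; linarith
      exact abs_le.2 ⟨by linarith, by linarith⟩
    rw [← mul_sub, abs_mul, abs_of_pos hξ, mul_left_comm]
    gcongr
  simpa using abs_sub_le_sub_of_abs_deriv_le_deriv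
    (fun y hy => (F.hasDerivAt_space_c hy.1 ht').sub (F.hasDerivAt_space_b hy.1 ht'))
    (fun y hy => (F.hasDerivAt_space_b hy.1 ht').const_mul η) hle
    ((F.c_origin t ht').sub (F.b_origin t ht')) ((F.b_origin t ht').const_mul η) hx

end CurvatureBound

/-! ### An upper bound for the mean curvature away from the origin -/

theorem hasDerivAt_space_meanH (hx : 0 < x) (ht : t ∈ Ico 0 F.T) :
    HasDerivAt (fun y => F.meanH y t)
      (F.ξ x t * (-(2 * F.k01 x t + F.k03 x t)
        - (2 * (F.bS x t / F.b x t) ^ 2 + (F.cS x t / F.c x t) ^ 2))) x := by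
  have hb := (F.b_pos x hx t ht).ne'
  have hc := (F.c_pos x hx t ht).ne'
  refine ((((F.hasDerivAt_space_bS hx ht).const_mul 2).div (F.hasDerivAt_space_b hx ht) hb).add
    ((F.hasDerivAt_space_cS hx ht).div (F.hasDerivAt_space_c hx ht) hc)).congr_deriv ?_
  field_simp
  ring

/-- Along each time slice `H` satisfies the Riccati inequality `H_s ≤ 2C - H² / 3`. -/
theorem exists_forall_meanH_le (ht₀ : t₀ < F.T)
    (hRm : ∀ x > 0, ∀ t ∈ Icc 0 t₀, F.RmNorm x t ≤ C) (ha : 0 < a) :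
    ∃ M > 0, ∀ x ≥ a, ∀ t ∈ Icc 0 t₀, F.meanH x t ≤ M := by
  obtain ⟨M₀, hM₀⟩ := isCompact_Icc.exists_bound_of_continuousOn
    (F.smooth_meanH.continuousOn_time ha ht₀)
  set M : ℝ := max M₀ (6 * |C| + 1)
  have hM : 6 * C < M ^ 2 := by
    nlinarith [le_max_right M₀ (6 * |C| + 1), le_abs_self C, abs_nonneg C]
  refine ⟨M, by positivity, fun x hx t ht => ?_⟩
  have ht' : t ∈ Ico 0 F.T := ⟨ht.1, ht.2.trans_lt ht₀⟩
  have hderiv : ∀ y ∈ Icc a x, HasDerivAt (fun z => F.meanH z t) _ y :=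
    fun y hy => hasDerivAt_space_meanH (ha.trans_le hy.1) ht'
  refine image_le_of_deriv_right_lt_deriv_boundary (B := fun _ => M)
    (fun y hy => (hderiv y hy).continuousAt.continuousWithinAt)
    (fun y hy => (hderiv y (Ico_subset_Icc_self hy)).hasDerivWithinAt)
    ((le_abs_self _).trans ((hM₀ t ht).trans (le_max_left _ _)))
    (fun _ => hasDerivAt_const _ _) (fun y hy hyM => ?_) ⟨hx, le_rfl⟩
  have hy0 : 0 < y := ha.trans_le hy.1
  refine mul_neg_of_pos_of_neg (F.ξ_pos y hy0 t ht') ?_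
  have hcurv : -(2 * F.k01 y t + F.k03 y t) ≤ 2 * C := by
    linarith [neg_le_abs (2 * F.k01 y t + F.k03 y t), hRm y hy0 t ht,
      F.abs_two_mul_k01_add_k03_le (x := y) (t := t)]
  have hHM : 2 * (F.bS y t / F.b y t) + F.cS y t / F.c y t = M := by
    rw [← hyM, meanH]
    ring
  have hsq := sq_nonneg (F.bS y t / F.b y t - F.cS y t / F.c y t)
  rw [← hHM] at hM
  linarith

end WarpedBergerFlow

namespace WarpedBergerFlow

variable {F : WarpedBergerFlow} {w V : ℝ → ℝ → ℝ} {a e l s t t₀ x y A B C M η : ℝ}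

/-! ### Arclength from a fixed sphere -/

variable (F) in
/-- The signed `g(t)`-distance from the sphere of radius `a` to the sphere of radius `x`. -/
def arclengthFrom (a x t : ℝ) : ℝ := ∫ y in a..x, F.ξ y t

theorem intervalIntegrable_ξ (ha : 0 < a) (hax : a ≤ x) (ht : t ∈ Ico 0 F.T) :
    IntervalIntegrable (fun y => F.ξ y t) volume a x :=
  ContinuousOn.intervalIntegrable_of_Icc hax <|
    (SpacetimeSmooth.continuousOn_space F.smooth_ξ ht).mono fun _ hy => ha.trans_le hy.1

theorem hasDerivAt_space_arclengthFrom (ha : 0 < a) (hax : a ≤ x) (ht : t ∈ Ico 0 F.T) :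
    HasDerivAt (fun y => F.arclengthFrom a y t) (F.ξ x t) x := by
  have hcont := SpacetimeSmooth.continuousOn_space F.smooth_ξ ht
  have hx : Ioi (0 : ℝ) ∈ 𝓝 x := Ioi_mem_nhds (ha.trans_le hax)
  exact intervalIntegral.integral_hasDerivAt_right (intervalIntegrable_ξ ha hax ht)
    (hcont.stronglyMeasurableAtFilter isOpen_Ioi x (ha.trans_le hax)) (hcont.continuousAt hx)

theorem arclengthFrom_nonneg (ha : 0 < a) (hax : a ≤ x) (ht : t ∈ Ico 0 F.T) :
    0 ≤ F.arclengthFrom a x t :=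
  intervalIntegral.integral_nonneg hax fun y hy => (F.ξ_pos y (ha.trans_le hy.1) t ht).le

theorem continuousOn_arclengthFrom (ha : 0 < a) (ht₀ : t₀ ∈ Ico 0 F.T) :
    ContinuousOn (fun p : ℝ × ℝ => F.arclengthFrom a p.1 p.2) (Ici a ×ˢ Icc 0 t₀) := by
  -- Clamping `ξ` to the domain makes it globally continuous without changing the integral.
  have hclamp : Continuous fun p : ℝ × ℝ => F.ξ (max p.1 a) (max 0 (min p.2 t₀)) :=
    F.smooth_ξ.continuousOn.comp_continuous
      (f := fun p : ℝ × ℝ => (max p.1 a, max 0 (min p.2 t₀))) (by fun_prop) fun p =>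
      ⟨ha.trans_le (le_max_right _ _), le_max_left _ _,
        max_lt F.T_pos ((min_le_right _ _).trans_lt ht₀.2)⟩
  have hintegral : Continuous fun p : ℝ × ℝ =>
      ∫ y in a..p.1, F.ξ (max y a) (max 0 (min p.2 t₀)) :=
    intervalIntegral.continuous_parametric_intervalIntegral_of_continuous
      (f := fun (p : ℝ × ℝ) y => F.ξ (max y a) (max 0 (min p.2 t₀)))
      (hclamp.comp (by fun_prop : Continuous fun q : (ℝ × ℝ) × ℝ => (q.2, q.1.2))) continuous_fst
  refine hintegral.continuousOn.congr fun p hp => intervalIntegral.integral_congr fun y hy => ?_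
  rw [uIcc_of_le hp.1] at hy
  simp only [max_eq_left hy.1, min_eq_left hp.2.2, max_eq_right hp.2.1]

theorem tendsto_arclengthFrom_atTop (ha : 0 < a) (ht : t ∈ Ico 0 F.T) :
    Tendsto (fun x => F.arclengthFrom a x t) atTop atTop := by
  refine (tendsto_atTop_add_const_right _ (-∫ y in (0 : ℝ)..a, F.ξ y t)
    (F.complete t ht)).congr' ?_
  filter_upwards [(F.complete t ht).eventually_gt_atTop 0, eventually_ge_atTop a] with x hpos hax
  have hint : IntervalIntegrable (fun y => F.ξ y t) volume 0 x :=
    not_imp_comm.1 intervalIntegral.integral_undef hpos.ne'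
  rw [← sub_eq_add_neg, intervalIntegral.integral_interval_sub_left hint]
  · rfl
  · exact hint.mono_set (uIcc_subset_uIcc_left (uIcc_of_le (ha.le.trans hax) ▸ ⟨ha.le, hax⟩))

theorem dS_eq_and_dS_dS_nonpos_of_isLocalMax (hw : SpacetimeSmooth F.T w) (ha : 0 < a)
    (hay : a < y) (ht : t ∈ Ico 0 F.T)
    (hmax : IsLocalMax (fun z => w z t - (η + e * (1 + F.arclengthFrom a z t))) y) :
    dS F.ξ w y t = e ∧ dS F.ξ (dS F.ξ w) y t ≤ 0 := by
  have hy : 0 < y := ha.trans hay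
  have hf : ∀ᶠ z in 𝓝 y, HasDerivAt (fun z => w z t - (η + e * (1 + F.arclengthFrom a z t)))
      (F.ξ z t * (dS F.ξ w z t - e)) z := by
    filter_upwards [Ioi_mem_nhds hay] with z hz
    refine ((F.hasDerivAt_space hw (ha.trans hz) ht).sub
      ((((hasDerivAt_space_arclengthFrom ha (le_of_lt hz) ht).const_add 1).const_mul
        e).const_add η)).congr_deriv ?_
    ring
  have hlocal := weighted_deriv_eq_zero_and_nonpos_of_isLocalMax
    (g := fun z => dS F.ξ w z t - e) hmax (F.ξ_pos y hy t ht)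
    (SpacetimeSmooth.hasDerivAt_space F.smooth_ξ hy ht).differentiableAt hf
    ((F.hasDerivAt_space (F.smooth_dS hw) hy ht).sub_const e)
  exact hlocal.imp_left sub_eq_zero.1

section CurvatureBound

variable (ht₀ : t₀ ∈ Ico 0 F.T) (hRm : ∀ x > 0, ∀ t ∈ Icc 0 t₀, F.RmNorm x t ≤ C)

include ht₀ hRm

theorem arclengthFrom_le_exp_mul (ha : 0 < a) (hax : a ≤ x) (hs : s ∈ Icc 0 t₀)
    (ht : t ∈ Icc 0 t₀) :
    F.arclengthFrom a x t ≤ Real.exp (2 * C * |t - s|) * F.arclengthFrom a x s := by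
  rw [arclengthFrom, arclengthFrom, ← intervalIntegral.integral_const_mul]
  exact intervalIntegral.integral_mono_on hax
    (intervalIntegrable_ξ ha hax ⟨ht.1, ht.2.trans_lt ht₀.2⟩)
    ((intervalIntegrable_ξ ha hax ⟨hs.1, hs.2.trans_lt ht₀.2⟩).const_mul _)
    fun y hy => ξ_le_exp_mul ht₀.2 hRm (ha.trans_le hy.1) hs ht

theorem eventually_forall_le_arclengthFrom (ha : 0 < a) (R : ℝ) :
    ∀ᶠ x in atTop, ∀ t ∈ Icc 0 t₀, R ≤ F.arclengthFrom a x t := by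
  have h0 : (0 : ℝ) ∈ Icc 0 t₀ := ⟨le_rfl, ht₀.1⟩
  filter_upwards [(tendsto_arclengthFrom_atTop ha ⟨le_rfl, F.T_pos⟩).eventually_ge_atTop
    (Real.exp (2 * C * t₀) * R), eventually_ge_atTop a] with x hR hax t ht
  have hC : 0 ≤ C := F.RmNorm_nonneg.trans (hRm a ha 0 h0)
  refine le_of_mul_le_mul_left ?_ (Real.exp_pos (2 * C * t₀))
  calc Real.exp (2 * C * t₀) * R ≤ F.arclengthFrom a x 0 := hR
    _ ≤ Real.exp (2 * C * |0 - t|) * F.arclengthFrom a x t :=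
      arclengthFrom_le_exp_mul ht₀ hRm ha hax ht h0
    _ ≤ Real.exp (2 * C * t₀) * F.arclengthFrom a x t := by
      rw [zero_sub, abs_neg, abs_of_nonneg ht.1]
      have hσ := arclengthFrom_nonneg ha hax ⟨ht.1, ht.2.trans_lt ht₀.2⟩
      gcongr
      exact ht.2

theorem monotoneOn_exp_mul_one_add_arclengthFrom (ha : 0 < a) (hax : a ≤ x) :
    MonotoneOn (fun t => Real.exp (2 * C * t) * (1 + F.arclengthFrom a x t)) (Icc 0 t₀) := by
  intro s hs t ht hst
  have hC : 0 ≤ C := F.RmNorm_nonneg.trans (hRm a ha 0 ⟨le_rfl, ht₀.1⟩)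
  have hone : 1 ≤ Real.exp (2 * C * (t - s)) :=
    Real.one_le_exp (mul_nonneg (by positivity) (sub_nonneg.2 hst))
  have hdist := arclengthFrom_le_exp_mul ht₀ hRm ha hax ht hs
  rw [abs_sub_comm, abs_of_nonneg (sub_nonneg.2 hst)] at hdist
  calc Real.exp (2 * C * s) * (1 + F.arclengthFrom a x s)
      ≤ Real.exp (2 * C * s) * (Real.exp (2 * C * (t - s)) * (1 + F.arclengthFrom a x t)) := by
        gcongr
        linarith
    _ = Real.exp (2 * C * t) * (1 + F.arclengthFrom a x t) := by
        rw [← mul_assoc, ← Real.exp_add]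
        ring_nf

theorem mul_exp_le_deriv_of_touching_barrier {v : ℝ → ℝ} (ha : 0 < a) (hax : a ≤ x)
    (hs : s ∈ Ioc 0 t₀) (he : 0 ≤ e) (hA : 0 ≤ A)
    (hle : ∀ u ∈ Icc 0 s,
      v u - (η + e * Real.exp ((2 * C + A) * u) * (1 + F.arclengthFrom a x u)) ≤ 0)
    (heq : v s - (η + e * Real.exp ((2 * C + A) * s) * (1 + F.arclengthFrom a x s)) = 0)
    (hv : HasDerivAt v l s) : A * (e * Real.exp ((2 * C + A) * s)) ≤ l := by
  set σ := F.arclengthFrom a x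
  have hσ : 0 ≤ σ s := arclengthFrom_nonneg ha hax ⟨hs.1.le, hs.2.trans_lt ht₀.2⟩
  have hsplit : ∀ u, Real.exp ((2 * C + A) * u) = Real.exp (2 * C * u) * Real.exp (A * u) :=
    fun u => by rw [← Real.exp_add, add_mul]
  let k := e * (Real.exp (2 * C * s) * (1 + σ s))
  have hexp : HasDerivAt (fun u => k * Real.exp (A * u)) (k * (Real.exp (A * s) * A)) s := by
    simpa using (((hasDerivAt_id s).const_mul A).exp).const_mul k
  have hmax : ∀ u ∈ Icc 0 s, v u - k * Real.exp (A * u) ≤ v s - k * Real.exp (A * s) :=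
    fun u hu => by
    have hmono : e * (Real.exp (2 * C * u) * (1 + σ u)) * Real.exp (A * u) ≤
        k * Real.exp (A * u) := by
      gcongr ?_ * _
      exact mul_le_mul_of_nonneg_left (monotoneOn_exp_mul_one_add_arclengthFrom ht₀ hRm ha hax
        ⟨hu.1, hu.2.trans hs.2⟩ ⟨hs.1.le, hs.2⟩ hu.2) he
    have hu' := hle u hu
    rw [hsplit] at hu' heq
    linarith
  have hderiv := deriv_nonneg_of_isMaxOn_left hs.1 hmax (hv.sub hexp)
  calc A * (e * Real.exp ((2 * C + A) * s))
      ≤ A * (e * Real.exp ((2 * C + A) * s)) * (1 + σ s) :=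
        le_mul_of_one_le_right (by positivity) (by linarith)
    _ = k * (Real.exp (A * s) * A) := by
        rw [hsplit]
        ring
    _ ≤ l := by linarith

/-! ### A maximum principle on the end `x ≥ a` -/

section MaximumPrinciple

variable (hw : SpacetimeSmooth F.T w) (ha : 0 < a) (hM : 0 ≤ M)
  (hV : ∀ x ≥ a, ∀ t ∈ Icc 0 t₀, V x t ≤ M) (hB : ∀ x ≥ a, ∀ t ∈ Icc 0 t₀, w x t ≤ B)
  (hleft : ∀ t ∈ Icc 0 t₀, w a t ≤ η) (hinit : ∀ x ≥ a, w x 0 ≤ η)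
  (hsub : ∀ x > a, ∀ t ∈ Ioc 0 t₀, η < w x t →
    deriv (fun u => w x u) t ≤ dS F.ξ (dS F.ξ w) x t + V x t * dS F.ξ w x t)

include ht₀ hRm hw ha hM hV hB hleft hinit hsub

/-- The barrier absorbs the drift: its arclength derivative `e * exp (…)` is constant in space,
and the rate `2 * C` compensates the shrinking of distances. -/
theorem sub_barrier_neg_of_parabolic_subsolution (he : 0 < e) (hx : a ≤ x) (ht : t ∈ Icc 0 t₀) :
    w x t - (η + e * Real.exp ((2 * C + (M + 1)) * t) * (1 + F.arclengthFrom a x t)) < 0 := by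
  have hC : 0 ≤ C := F.RmNorm_nonneg.trans (hRm a ha 0 ⟨le_rfl, ht₀.1⟩)
  have hmem : ∀ {u}, u ∈ Icc 0 t₀ → u ∈ Ico 0 F.T := fun hu => ⟨hu.1, hu.2.trans_lt ht₀.2⟩
  have hpos : ∀ z ≥ a, ∀ u ∈ Icc 0 t₀,
      0 < e * Real.exp ((2 * C + (M + 1)) * u) * (1 + F.arclengthFrom a z u) := fun z hz u hu =>
    mul_pos (by positivity) (by linarith [arclengthFrom_nonneg ha hz (hmem hu)])
  obtain ⟨X, hX, hxX⟩ := ((eventually_forall_le_arclengthFrom ht₀ hRm ha ((B - η) / e)).and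
    (eventually_ge_atTop x)).exists
  refine neg_of_forall_not_touching (a := a) (X := X) (t₀ := 0) (t₁ := t₀) (f := fun z u =>
    w z u - (η + e * Real.exp ((2 * C + (M + 1)) * u) * (1 + F.arclengthFrom a z u))) ?_
    (fun u hu => ?_) (fun u hu => ?_) (fun z hz => ?_) ?_ ⟨hx, hxX⟩ ht
  · have hσ := (continuousOn_arclengthFrom ha ht₀).mono
      (prod_mono (Icc_subset_Ici_self : Icc a X ⊆ Ici a) Subset.rfl)
    have hwcont := ContinuousOn.mono (ContDiffOn.continuousOn hw)
      (prod_mono (fun z (hz : z ∈ Icc a X) => ha.trans_le hz.1) fun _ => hmem)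
    fun_prop
  · linarith [hleft u hu, hpos a le_rfl u hu]
  · have hexp : 1 ≤ Real.exp ((2 * C + (M + 1)) * u) :=
      Real.one_le_exp (mul_nonneg (by positivity) hu.1)
    have hdist : B - η ≤ e * F.arclengthFrom a X u := (div_le_iff₀' he).1 (hX u hu)
    have hσ := arclengthFrom_nonneg ha (hx.trans hxX) (hmem hu)
    have := mul_le_mul_of_nonneg_left hexp (show 0 ≤ e * (1 + F.arclengthFrom a X u) by positivity)
    linarith [hB X (hx.trans hxX) u hu]
  · linarith [hinit z hz.1, hpos z hz.1 0 ⟨le_rfl, ht₀.1⟩]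
  · intro y hy s hs hzero hmax hbefore
    have hs' := Ioc_subset_Icc_self hs
    obtain ⟨hw₁, hw₂⟩ := dS_eq_and_dS_dS_nonpos_of_isLocalMax hw ha hy.1 (hmem hs') hmax
    have hwt := mul_exp_le_deriv_of_touching_barrier ht₀ hRm ha hy.1.le hs he.le (by positivity)
      hbefore hzero (hw.hasDerivAt_time (ha.trans hy.1) ⟨hs.1, hs.2.trans_lt ht₀.2⟩)
    have hwη : η < w y s := by linarith [hpos y hy.1.le s hs']
    have hκ : 0 < e * Real.exp ((2 * C + (M + 1)) * s) := by positivity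
    have hdrift := mul_le_mul_of_nonneg_right (hV y hy.1.le s hs') hκ.le
    have hevol := hsub y hy.1 s hs hwη
    rw [hw₁] at hevol
    linarith

theorem le_of_parabolic_subsolution (hx : a ≤ x) (ht : t ∈ Icc 0 t₀) : w x t ≤ η := by
  set k := Real.exp ((2 * C + (M + 1)) * t) * (1 + F.arclengthFrom a x t)
  have hlim : Tendsto (fun e => η + e * k) (𝓝[>] 0) (𝓝 η) := by
    simpa using ((tendsto_id.mul_const k).const_add η).mono_left
      (nhdsWithin_le_nhds (a := (0 : ℝ)) (s := Ioi 0))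
  refine ge_of_tendsto hlim ?_
  filter_upwards [self_mem_nhdsWithin] with e he
  rw [← mul_assoc]
  exact (sub_neg.1 (sub_barrier_neg_of_parabolic_subsolution ht₀ hRm hw ha hM hV hB hleft hinit
    hsub he hx ht)).le

end MaximumPrinciple

end CurvatureBound

end WarpedBergerFlow

namespace WarpedBergerFlow

variable {F : WarpedBergerFlow} {x t t₀ C : ℝ}

/-! ### Preservation of the Berger ordering -/

variable (F) in
/-- `log (c / b)`, the logarithm of the ratio of the warping functions. -/
def logRatio (x t : ℝ) : ℝ := Real.log (F.c x t / F.b x t)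

theorem smooth_logRatio : SpacetimeSmooth F.T F.logRatio :=
  (SpacetimeSmooth.div F.smooth_c F.smooth_b F.b_pos).log fun x hx t ht =>
    div_pos (F.c_pos x hx t ht) (F.b_pos x hx t ht)

theorem dS_logRatio (hx : 0 < x) (ht : t ∈ Ico 0 F.T) :
    dS F.ξ F.logRatio x t = F.cS x t / F.c x t - F.bS x t / F.b x t := by
  have hb := (F.b_pos x hx t ht).ne'
  have hc := (F.c_pos x hx t ht).ne'
  refine F.dS_eq_of_hasDerivAt hx ht ((((F.hasDerivAt_space_c hx ht).div
    (F.hasDerivAt_space_b hx ht) hb).log (div_ne_zero hc hb)).congr_deriv ?_)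
  simp only [Pi.div_apply]
  field_simp

theorem dS_dS_logRatio (hx : 0 < x) (ht : t ∈ Ico 0 F.T) :
    dS F.ξ (dS F.ξ F.logRatio) x t =
      F.k01 x t - F.k03 x t + (F.bS x t / F.b x t) ^ 2 - (F.cS x t / F.c x t) ^ 2 := by
  have hb := (F.b_pos x hx t ht).ne'
  have hc := (F.c_pos x hx t ht).ne'
  have hfirst : (fun y => dS F.ξ F.logRatio y t) =ᶠ[𝓝 x]
      fun y => F.cS y t / F.c y t - F.bS y t / F.b y t :=
    (eventually_gt_nhds hx).mono fun y hy => dS_logRatio hy ht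
  refine F.dS_eq_of_hasDerivAt hx ht (((((F.hasDerivAt_space_cS hx ht).div
    (F.hasDerivAt_space_c hx ht) hc).sub ((F.hasDerivAt_space_bS hx ht).div
    (F.hasDerivAt_space_b hx ht) hb)).congr_of_eventuallyEq hfirst).congr_deriv ?_)
  field_simp
  ring

theorem hasDerivAt_time_logRatio (hx : 0 < x) (ht : t ∈ Ioo 0 F.T) :
    HasDerivAt (fun u => F.logRatio x u)
      (dS F.ξ (dS F.ξ F.logRatio) x t + F.meanH x t * dS F.ξ F.logRatio x t
        + 4 * (F.b x t ^ 2 - F.c x t ^ 2) / F.b x t ^ 4) t := by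
  have ht' := Ioo_subset_Ico_self ht
  have hb := (F.b_pos x hx t ht').ne'
  have hc := (F.c_pos x hx t ht').ne'
  refine (((F.hasDerivAt_time_c hx ht).div (F.hasDerivAt_time_b hx ht) hb).log
    (div_ne_zero hc hb)).congr_deriv ?_
  simp only [dS_dS_logRatio hx ht', dS_logRatio hx ht', meanH, k12, k13, Pi.div_apply]
  field_simp
  ring

theorem logRatio_le (ht₀ : t₀ ∈ Ico 0 F.T) (hRm : ∀ x > 0, ∀ t ∈ Icc 0 t₀, F.RmNorm x t ≤ C)
    (hx : 0 < x) (ht : t ∈ Icc 0 t₀) : F.logRatio x t ≤ 4 * C * t₀ := by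
  have h0 : (0 : ℝ) ∈ Icc 0 t₀ := ⟨le_rfl, ht₀.1⟩
  have ht' : t ∈ Ico 0 F.T := ⟨ht.1, ht.2.trans_lt ht₀.2⟩
  have hC : 0 ≤ C := F.RmNorm_nonneg.trans (hRm x hx 0 h0)
  have hcb : F.c x t / F.b x t ≤ Real.exp (4 * C * t) := by
    rw [div_le_iff₀ (F.b_pos x hx t ht')]
    calc F.c x t ≤ Real.exp (2 * C * |t - 0|) * F.c x 0 := c_le_exp_mul ht₀.2 hRm hx h0 ht
      _ ≤ Real.exp (2 * C * |t - 0|) * (Real.exp (2 * C * |0 - t|) * F.b x t) := by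
        gcongr
        exact (F.ordered_init x hx).trans (b_le_exp_mul ht₀.2 hRm hx ht h0)
      _ = Real.exp (4 * C * t) * F.b x t := by
        rw [abs_sub_comm 0 t, sub_zero, abs_of_nonneg ht.1, ← mul_assoc, ← Real.exp_add]
        ring_nf
  calc F.logRatio x t ≤ 4 * C * t :=
        (Real.log_le_iff_le_exp (div_pos (F.c_pos x hx t ht') (F.b_pos x hx t ht'))).2 hcb
    _ ≤ 4 * C * t₀ := by gcongr; exact ht.2

theorem logRatio_nonpos_iff (hx : 0 < x) (ht : t ∈ Ico 0 F.T) :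
    F.logRatio x t ≤ 0 ↔ F.c x t ≤ F.b x t := by
  have hb := F.b_pos x hx t ht
  rw [logRatio, Real.log_nonpos_iff (div_pos (F.c_pos x hx t ht) hb).le, div_le_one hb]

theorem eventually_logRatio_le (ht₀ : t₀ ∈ Ico 0 F.T)
    (hRm : ∀ x > 0, ∀ t ∈ Icc 0 t₀, F.RmNorm x t ≤ C) {η : ℝ} (hη : 0 < η) :
    ∀ᶠ x in 𝓝[>] 0, ∀ t ∈ Icc 0 t₀, F.logRatio x t ≤ η := by
  filter_upwards [eventually_abs_c_sub_b_le ht₀ hRm hη, self_mem_nhdsWithin] with x hnear hx t ht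
  have ht' : t ∈ Ico 0 F.T := ⟨ht.1, ht.2.trans_lt ht₀.2⟩
  have hb := F.b_pos x hx t ht'
  calc F.logRatio x t ≤ F.c x t / F.b x t - 1 :=
        Real.log_le_sub_one_of_pos (div_pos (F.c_pos x hx t ht') hb)
    _ = (F.c x t - F.b x t) / F.b x t := by rw [sub_div, div_self hb.ne']
    _ ≤ η := (div_le_iff₀ hb).2 ((le_abs_self _).trans (hnear t ht))

theorem c_le_b (hBC : F.BoundedCurvature) (hx : 0 < x) (ht : t ∈ Ico 0 F.T) :
    F.c x t ≤ F.b x t := by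
  obtain ⟨C, hRm⟩ := hBC t ht
  refine (logRatio_nonpos_iff hx ht).1 (le_of_forall_pos_le_add fun η hη => ?_)
  obtain ⟨a, hnear, ha, hax⟩ :=
    ((eventually_logRatio_le ht hRm hη).and (Ioo_mem_nhdsGT hx)).exists
  obtain ⟨M, hM, hH⟩ := exists_forall_meanH_le ht.2 hRm ha
  rw [zero_add]
  refine le_of_parabolic_subsolution ht hRm smooth_logRatio ha hM.le hH
    (fun y hy u hu => logRatio_le ht hRm (ha.trans_le hy) hu) hnear
    (fun y hy => ?_) (fun y hy u hu hpos => ?_) hax.le ⟨ht.1, le_rfl⟩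
  · have hy0 := ha.trans_le hy
    exact ((logRatio_nonpos_iff hy0 ⟨le_rfl, F.T_pos⟩).2 (F.ordered_init y hy0)).trans hη.le
  · have hy0 := ha.trans hy
    have hu' : u ∈ Ioo 0 F.T := ⟨hu.1, hu.2.trans_lt ht.2⟩
    have hb := F.b_pos y hy0 u (Ioo_subset_Ico_self hu')
    have hbc : F.b y u < F.c y u := not_le.1 fun hle =>
      (hη.trans hpos).not_ge ((logRatio_nonpos_iff hy0 (Ioo_subset_Ico_self hu')).2 hle)
    have hreaction : 4 * (F.b y u ^ 2 - F.c y u ^ 2) / F.b y u ^ 4 ≤ 0 :=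
      div_nonpos_of_nonpos_of_nonneg (by nlinarith) (by positivity)
    rw [(hasDerivAt_time_logRatio hy0 hu').deriv]
    linarith

/-! ### Evolution of `H` and of `c H` -/

variable (F) in
/-- The logarithm of the volume density `b² c` of the distance spheres; its arclength derivative
is the mean curvature. -/
def logVolume (x t : ℝ) : ℝ := 2 * Real.log (F.b x t) + Real.log (F.c x t)

theorem smooth_logVolume : SpacetimeSmooth F.T F.logVolume :=
  (SpacetimeSmooth.log F.smooth_b F.b_pos).const_mul.add (SpacetimeSmooth.log F.smooth_c F.c_pos)

theorem dS_logVolume (hx : 0 < x) (ht : t ∈ Ico 0 F.T) :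
    dS F.ξ F.logVolume x t = F.meanH x t := by
  refine F.dS_eq_of_hasDerivAt hx ht (((((F.hasDerivAt_space_b hx ht).log
    (F.b_pos x hx t ht).ne').const_mul 2).add ((F.hasDerivAt_space_c hx ht).log
    (F.c_pos x hx t ht).ne')).congr_deriv ?_)
  rw [meanH]
  ring

theorem dS_meanH (hx : 0 < x) (ht : t ∈ Ico 0 F.T) :
    dS F.ξ F.meanH x t = -(2 * F.k01 x t + F.k03 x t)
      - (2 * (F.bS x t / F.b x t) ^ 2 + (F.cS x t / F.c x t) ^ 2) :=
  F.dS_eq_of_hasDerivAt hx ht (hasDerivAt_space_meanH hx ht)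

theorem hasDerivAt_time_logVolume (hx : 0 < x) (ht : t ∈ Ioo 0 F.T) :
    HasDerivAt (fun u => F.logVolume x u)
      (dS F.ξ F.meanH x t + F.meanH x t ^ 2
        + 2 * F.c x t ^ 2 / F.b x t ^ 4 - 8 / F.b x t ^ 2) t := by
  have ht' := Ioo_subset_Ico_self ht
  have hb := (F.b_pos x hx t ht').ne'
  have hc := (F.c_pos x hx t ht').ne'
  refine ((((F.hasDerivAt_time_b hx ht).log hb).const_mul 2).add
    ((F.hasDerivAt_time_c hx ht).log hc)).congr_deriv ?_
  simp only [dS_meanH hx ht', meanH, k12, k13]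
  field_simp
  ring

theorem hasDerivAt_time_meanH (hx : 0 < x) (ht : t ∈ Ioo 0 F.T) :
    HasDerivAt (fun u => F.meanH x u)
      (dS F.ξ (dS F.ξ F.meanH) x t + 3 * F.meanH x t * dS F.ξ F.meanH x t
        + (2 * (F.bS x t / F.b x t) ^ 2 + (F.cS x t / F.c x t) ^ 2) * F.meanH x t
        + 4 * F.c x t ^ 2 / F.b x t ^ 4 * (F.cS x t / F.c x t - 2 * (F.bS x t / F.b x t))
        + 16 / F.b x t ^ 2 * (F.bS x t / F.b x t)) t := by
  have ht' := Ioo_subset_Ico_self ht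
  have hb := (F.b_pos x hx t ht').ne'
  have hc := (F.c_pos x hx t ht').ne'
  have hH : (fun u => F.meanH x u) =ᶠ[𝓝 t] fun u => dS F.ξ F.logVolume x u :=
    Filter.mem_of_superset (Ioo_mem_nhds ht.1 ht.2) fun u hu =>
      (dS_logVolume hx (Ioo_subset_Ico_self hu)).symm
  have hbx := F.hasDerivAt_space_b hx ht'
  have hspace : HasDerivAt (fun y => dS F.ξ F.meanH y t + F.meanH y t ^ 2
      + 2 * F.c y t ^ 2 / F.b y t ^ 4 - 8 / F.b y t ^ 2)
      (F.ξ x t * (dS F.ξ (dS F.ξ F.meanH) x t + 2 * F.meanH x t * dS F.ξ F.meanH x t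
        + 4 * F.c x t ^ 2 / F.b x t ^ 4 * (F.cS x t / F.c x t - 2 * (F.bS x t / F.b x t))
        + 16 / F.b x t ^ 2 * (F.bS x t / F.b x t))) x := by
    refine ((((F.hasDerivAt_space (F.smooth_dS F.smooth_meanH) hx ht').add
      ((F.hasDerivAt_space F.smooth_meanH hx ht').pow 2)).add
      ((((F.hasDerivAt_space_c hx ht').pow 2).const_mul 2).div (hbx.pow 4) (pow_ne_zero 4 hb))).sub
      ((hasDerivAt_const x 8).div (hbx.pow 2) (pow_ne_zero 2 hb))).congr_deriv ?_
    simp only [Pi.pow_apply]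
    field_simp
    ring
  refine ((F.hasDerivAt_time_dS smooth_logVolume hx ht (fun y hy =>
    hasDerivAt_time_logVolume hy ht) hspace).congr_of_eventuallyEq hH).congr_deriv ?_
  rw [dS_logVolume hx ht', show 2 * F.k01 x t + F.k03 x t = -dS F.ξ F.meanH x t
    - (2 * (F.bS x t / F.b x t) ^ 2 + (F.cS x t / F.c x t) ^ 2) by rw [dS_meanH hx ht']; ring]
  ring

variable (F) in
/-- The scale-invariant quantity `c H`. -/
def cH (x t : ℝ) : ℝ := F.c x t * F.meanH x t

theorem smooth_cH : SpacetimeSmooth F.T F.cH :=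
  SpacetimeSmooth.mul F.smooth_c F.smooth_meanH

theorem dS_cH (hx : 0 < x) (ht : t ∈ Ico 0 F.T) :
    dS F.ξ F.cH x t = F.cS x t * F.meanH x t + F.c x t * dS F.ξ F.meanH x t := by
  refine F.dS_eq_of_hasDerivAt hx ht (((F.hasDerivAt_space_c hx ht).mul
    (F.hasDerivAt_space F.smooth_meanH hx ht)).congr_deriv ?_)
  ring

theorem dS_dS_cH (hx : 0 < x) (ht : t ∈ Ico 0 F.T) :
    dS F.ξ (dS F.ξ F.cH) x t = -F.k03 x t * F.c x t * F.meanH x t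
      + 2 * F.cS x t * dS F.ξ F.meanH x t + F.c x t * dS F.ξ (dS F.ξ F.meanH) x t := by
  have hfirst : (fun y => dS F.ξ F.cH y t) =ᶠ[𝓝 x]
      fun y => F.cS y t * F.meanH y t + F.c y t * dS F.ξ F.meanH y t :=
    (eventually_gt_nhds hx).mono fun y hy => dS_cH hy ht
  have hHx := F.hasDerivAt_space F.smooth_meanH hx ht
  have hHsx := F.hasDerivAt_space (F.smooth_dS F.smooth_meanH) hx ht
  refine F.dS_eq_of_hasDerivAt hx ht (((((F.hasDerivAt_space_cS hx ht).mul hHx).add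
    ((F.hasDerivAt_space_c hx ht).mul hHsx)).congr_of_eventuallyEq hfirst).congr_deriv ?_)
  ring

theorem hasDerivAt_time_cH (hx : 0 < x) (ht : t ∈ Ioo 0 F.T) :
    HasDerivAt (fun u => F.cH x u)
      (dS F.ξ (dS F.ξ F.cH) x t
        + (3 * F.meanH x t - 2 * (F.cS x t / F.c x t)) * dS F.ξ F.cH x t
        + F.cH x t * (2 * (F.bS x t / F.b x t) ^ 2
          - 4 * (F.bS x t / F.b x t) * (F.cS x t / F.c x t) + 2 * F.c x t ^ 2 / F.b x t ^ 4)
        + 16 * F.c x t / F.b x t ^ 2 * (F.bS x t / F.b x t)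
          * (1 - F.c x t ^ 2 / F.b x t ^ 2)) t := by
  have ht' := Ioo_subset_Ico_self ht
  have hb := (F.b_pos x hx t ht').ne'
  have hc := (F.c_pos x hx t ht').ne'
  refine ((F.hasDerivAt_time_c hx ht).mul (hasDerivAt_time_meanH hx ht)).congr_deriv ?_
  rw [dS_dS_cH hx ht', dS_cH hx ht', cH, k13]
  generalize dS F.ξ F.meanH x t = Hs
  generalize dS F.ξ (dS F.ξ F.meanH) x t = Hss
  rw [meanH]
  field_simp
  ring

end WarpedBergerFlow

/-! ### The lower bound for `c H` -/

theorem berger_reaction_nonneg {b c p q : ℝ} (hb : 0 < b) (hc : 0 < c) (hcb : c ≤ b) (hp : 0 ≤ p)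
    (hnonneg : 0 ≤ c * (2 * p + q)) (hle : c * (2 * p + q) ≤ (c / b) ^ 2) :
    0 ≤ c * (2 * p + q) * (2 * p ^ 2 - 4 * p * q + 2 * c ^ 2 / b ^ 4)
      + 16 * c / b ^ 2 * p * (1 - c ^ 2 / b ^ 2) := by
  have hH : 0 ≤ 2 * p + q := nonneg_of_mul_nonneg_right hnonneg hc
  have hHcb : 2 * p + q ≤ c / b ^ 2 := by
    refine le_of_mul_le_mul_left (hle.trans_eq ?_) hc
    ring
  have hHsq : (2 * p + q) ^ 2 ≤ c ^ 2 / b ^ 4 := by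
    calc (2 * p + q) ^ 2 ≤ (c / b ^ 2) ^ 2 := by gcongr
      _ = c ^ 2 / b ^ 4 := by ring
  have hzeroth : 0 ≤ 2 * p ^ 2 - 4 * p * q + 2 * c ^ 2 / b ^ 4 := by
    calc 0 ≤ 2 * (p + q) ^ 2 + 8 * p ^ 2 := by positivity
      _ = 2 * p ^ 2 - 4 * p * q + 2 * (2 * p + q) ^ 2 := by ring
      _ ≤ 2 * p ^ 2 - 4 * p * q + 2 * (c ^ 2 / b ^ 4) := by gcongr
      _ = _ := by ring
  have hratio : c ^ 2 / b ^ 2 ≤ 1 := div_le_one_of_le₀ (by gcongr) (by positivity)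
  have : 0 ≤ 1 - c ^ 2 / b ^ 2 := sub_nonneg.2 hratio
  positivity

namespace WarpedBergerFlow

variable {F : WarpedBergerFlow} {a k t t₀ t₁ x C X : ℝ}

theorem eventually_one_lt_cH (ht₀ : t₀ ∈ Ico 0 F.T)
    (hRm : ∀ x > 0, ∀ t ∈ Icc 0 t₀, F.RmNorm x t ≤ C) :
    ∀ᶠ x in 𝓝[>] 0, ∀ t ∈ Icc 0 t₀, 1 < F.cH x t := by
  have hη : (0 : ℝ) < 1 / 4 := by norm_num
  filter_upwards [eventually_abs_bS_sub_one_le ht₀ hRm hη, eventually_abs_cS_sub_one_le ht₀ hRm hη,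
    eventually_abs_c_sub_b_le ht₀ hRm hη, self_mem_nhdsWithin] with x hbS hcS hcb hx t ht
  have ht' : t ∈ Ico 0 F.T := ⟨ht.1, ht.2.trans_lt ht₀.2⟩
  have hb := F.b_pos x hx t ht'
  have hc := (F.c_pos x hx t ht').ne'
  have hbS' := (abs_le.1 (hbS t ht)).1
  have hcS' := (abs_le.1 (hcS t ht)).1
  have hratio : 3 / 4 ≤ F.c x t / F.b x t :=
    (le_div_iff₀ hb).2 (by linarith [(abs_le.1 (hcb t ht)).1])
  calc 1 < 2 * (3 / 4) * (3 / 4) + (3 / 4 : ℝ) := by norm_num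
    _ ≤ 2 * F.bS x t * (F.c x t / F.b x t) + F.cS x t := by gcongr <;> linarith
    _ = F.cH x t := by
      rw [cH, meanH]
      field_simp

theorem cH_supersolution (hBC : F.BoundedCurvature) (hx : 0 < x) (ht : t ∈ Ioo 0 F.T)
    (hbs : 0 ≤ F.bS x t) (hnonneg : 0 ≤ F.cH x t) (hle : F.cH x t ≤ (F.c x t / F.b x t) ^ 2) :
    dS F.ξ (dS F.ξ F.cH) x t
      + (3 * F.meanH x t - 2 * (F.cS x t / F.c x t)) * dS F.ξ F.cH x t
      ≤ deriv (fun u => F.cH x u) t := by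
  have ht' := Ioo_subset_Ico_self ht
  have hb := F.b_pos x hx t ht'
  have hcH : F.cH x t = F.c x t * (2 * (F.bS x t / F.b x t) + F.cS x t / F.c x t) := by
    rw [cH, meanH, mul_div_assoc]
  have hreaction := berger_reaction_nonneg hb (F.c_pos x hx t ht') (c_le_b hBC hx ht')
    (div_nonneg hbs hb.le) (hcH ▸ hnonneg) (hcH ▸ hle)
  rw [← hcH] at hreaction
  rw [(hasDerivAt_time_cH hx ht).deriv]
  linarith

theorem dS_eq_zero_and_dS_dS_nonneg_of_isLocalMin {w : ℝ → ℝ → ℝ} (hw : SpacetimeSmooth F.T w)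
    (hx : 0 < x) (ht : t ∈ Ico 0 F.T) (hmin : IsLocalMin (fun y => w y t) x) :
    dS F.ξ w x t = 0 ∧ 0 ≤ dS F.ξ (dS F.ξ w) x t := by
  have hneg : ∀ᶠ y in 𝓝 x, HasDerivAt (fun y => -w y t) (F.ξ y t * -dS F.ξ w y t) y :=
    (eventually_gt_nhds hx).mono fun y hy =>
      (F.hasDerivAt_space hw hy ht).neg.congr_deriv (mul_neg _ _).symm
  have hlocal := weighted_deriv_eq_zero_and_nonpos_of_isLocalMax
    (g := fun y => -dS F.ξ w y t) hmin.neg (F.ξ_pos x hx t ht)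
    (SpacetimeSmooth.hasDerivAt_space F.smooth_ξ hx ht).differentiableAt hneg
    ((F.hasDerivAt_space (F.smooth_dS hw) hx ht).neg.congr_deriv (mul_neg _ _).symm)
  exact hlocal.imp neg_eq_zero.1 neg_nonpos.1

/-- A minimum of `c H` reaching a level `k ≤ (c / b)²` would sit where the reaction term of `c H`
is nonnegative; tilting the level in time makes the contradiction strict. -/
theorem le_cH_of_le_on_parabolic_boundary (hBC : F.BoundedCurvature) (ha : 0 < a) (ht₀ : 0 ≤ t₀)
    (ht₁ : t₁ < F.T) (hk : 0 < k) (hbs : ∀ x ∈ Icc a X, ∀ t ∈ Icc t₀ t₁, 0 ≤ F.bS x t)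
    (hcb : ∀ x ∈ Icc a X, ∀ t ∈ Icc t₀ t₁, k ≤ (F.c x t / F.b x t) ^ 2)
    (hleft : ∀ t ∈ Icc t₀ t₁, k ≤ F.cH a t) (hright : ∀ t ∈ Icc t₀ t₁, k ≤ F.cH X t)
    (hinit : ∀ x ∈ Icc a X, k ≤ F.cH x t₀) (hx : x ∈ Icc a X) (ht : t ∈ Icc t₀ t₁) :
    k ≤ F.cH x t := by
  by_contra! hlt
  obtain ⟨m, hm, hmk⟩ := exists_between (max_lt hk hlt)
  have hm0 : 0 < m := (le_max_left _ _).trans_lt hm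
  obtain ⟨κ, hκ, hκk⟩ := exists_pos_mul_lt (sub_pos.2 hmk) (t₁ - t₀)
  have hmono : ∀ u ≥ t₀, κ * (t₁ - u) ≤ κ * (t₁ - t₀) := fun u hu => by gcongr
  have hneg : m + κ * (t₁ - t) - F.cH x t < 0 := by
    refine neg_of_forall_not_touching (f := fun y u => m + κ * (t₁ - u) - F.cH y u)
      (a := a) (X := X) (t₀ := t₀) (t₁ := t₁) ?_ (fun u hu => ?_) (fun u hu => ?_) (fun y hy => ?_)
      (fun y hy s hs hzero hmax hbefore => ?_) hx ht
    · have hcont := ContinuousOn.mono (ContDiffOn.continuousOn (smooth_cH (F := F)))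
        (prod_mono (fun y (hy : y ∈ Icc a X) => ha.trans_le hy.1)
          fun u (hu : u ∈ Icc t₀ t₁) => ⟨ht₀.trans hu.1, hu.2.trans_lt ht₁⟩)
      fun_prop
    · linarith [hleft u hu, hmono u hu.1]
    · linarith [hright u hu, hmono u hu.1]
    · linarith [hinit y hy]
    · have hy0 := ha.trans hy.1
      have hs' : s ∈ Ioo 0 F.T := ⟨ht₀.trans_lt hs.1, hs.2.trans_lt ht₁⟩
      have hyX := Ioo_subset_Icc_self hy
      have hst := Ioc_subset_Icc_self hs
      have hmin : IsLocalMin (fun z => F.cH z s) y := hmax.mono fun z hz => by linarith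
      obtain ⟨hfirst, hsecond⟩ := dS_eq_zero_and_dS_dS_nonneg_of_isLocalMin smooth_cH hy0
        (Ioo_subset_Ico_self hs') hmin
      have hsuper := cH_supersolution hBC hy0 hs' (hbs y hyX s hst)
        (by linarith [mul_nonneg hκ.le (sub_nonneg.2 hs.2)])
        (by linarith [hcb y hyX s hst, hmono s hst.1])
      rw [hfirst] at hsuper
      have htime := deriv_nonneg_of_isMaxOn_left hs.1 (fun u hu => (hbefore u hu).trans hzero.ge)
        (((((hasDerivAt_id s).const_sub t₁).const_mul κ).const_add m).sub
          (smooth_cH.hasDerivAt_time hy0 hs'))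
      linarith
  linarith [le_max_right 0 (F.cH x t), mul_nonneg hκ.le (sub_nonneg.2 ht.2)]

end WarpedBergerFlow

theorem warpedBerger_cH_lower_bound_general (F : WarpedBergerFlow) (hBC : F.BoundedCurvature)
    {x₂ δ t' ε : ℝ} (hδ : 0 < δ) (ht' : t' ∈ Ico 0 F.T) (hε : 0 < ε)
    (hbs : ∀ x ∈ Ioc 0 x₂, ∀ t ∈ Ico t' F.T, 0 ≤ F.bS x t)
    (hlat : ∀ t ∈ Ico t' F.T, δ ≤ F.c x₂ t * F.meanH x₂ t)
    (hinit : ∀ x ∈ Ioc 0 x₂, δ ≤ F.c x t' * F.meanH x t')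
    (hcb : ∀ x ∈ Ioc 0 x₂, ∀ t ∈ Ico t' F.T, ε ≤ F.c x t / F.b x t) :
    ∀ x ∈ Ioc 0 x₂, ∀ t ∈ Ico t' F.T, min δ (ε ^ 2) ≤ F.c x t * F.meanH x t := by
  intro x hx t ht
  have hT : ∀ {u}, u ∈ Icc t' t → u ∈ Ico t' F.T := fun hu => ⟨hu.1, hu.2.trans_lt ht.2⟩
  have ht0 : t ∈ Ico 0 F.T := ⟨ht'.1.trans ht.1, ht.2⟩
  have hsq : ∀ y ∈ Ioc 0 x₂, ∀ u ∈ Icc t' t, min δ (ε ^ 2) ≤ (F.c y u / F.b y u) ^ 2 :=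
    fun y hy u hu => (min_le_right _ _).trans (pow_le_pow_left₀ hε.le (hcb y hy u (hT hu)) 2)
  obtain ⟨C, hRm⟩ := hBC t ht0
  obtain ⟨a, hnear, ha, hax⟩ :=
    ((WarpedBergerFlow.eventually_one_lt_cH ht0 hRm).and (Ioo_mem_nhdsGT hx.1)).exists
  have hIoc : Icc a x₂ ⊆ Ioc 0 x₂ := fun y hy => ⟨ha.trans_le hy.1, hy.2⟩
  have hleft : ∀ u ∈ Icc t' t, min δ (ε ^ 2) ≤ F.cH a u := fun u hu => by
    have hu0 : u ∈ Icc 0 t := ⟨ht'.1.trans hu.1, hu.2⟩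
    have hu' : u ∈ Ico 0 F.T := ⟨hu0.1, hu0.2.trans_lt ht.2⟩
    have hb := F.b_pos a ha u hu'
    have hratio : F.c a u / F.b a u ≤ 1 :=
      div_le_one_of_le₀ (WarpedBergerFlow.c_le_b hBC ha hu') hb.le
    calc min δ (ε ^ 2) ≤ (F.c a u / F.b a u) ^ 2 := hsq a ⟨ha, hax.le.trans hx.2⟩ u hu
      _ ≤ 1 := pow_le_one₀ (div_pos (F.c_pos a ha u hu') hb).le hratio
      _ ≤ F.cH a u := (hnear u hu0).le
  exact WarpedBergerFlow.le_cH_of_le_on_parabolic_boundary hBC ha ht'.1 ht.2 (by positivity)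
    (fun y hy u hu => hbs y (hIoc hy) u (hT hu)) (fun y hy => hsq y (hIoc hy)) hleft
    (fun u hu => (min_le_left _ _).trans (hlat u (hT hu)))
    (fun y hy => (min_le_left _ _).trans (hinit y (hIoc hy))) ⟨hax.le, hx.2⟩ ⟨ht.1, le_rfl⟩

/-- for a warped Berger Ricci flow with `T < ∞`, `b_s ≥ 0` and `H ≥ 0`
along the flow, if `c·H ≥ δ` on the lateral and initial parts of the parabolic boundary
of `{0 < x ≤ x̃₂} × [t̃,T)`, `c/b ≥ ε` and `|c_s/c − b_s/b| ≤ α` there, then `c·H` admits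
a uniform positive lower bound `μ` on `{0 < x ≤ x̃₂} × [t̃,T)`. -/
theorem warpedBerger_cH_lower_bound (F : WarpedBergerFlow) (hBC : F.BoundedCurvature)
    (hbs : ∀ x > 0, ∀ t ∈ Set.Ico (0:ℝ) F.T, 0 ≤ F.bS x t)
    (hH : ∀ x > 0, ∀ t ∈ Set.Ico (0:ℝ) F.T, 0 ≤ F.meanH x t)
    (x₂ : ℝ) (hx₂ : 0 < x₂) (δ : ℝ) (hδ : 0 < δ) (t' : ℝ) (ht' : t' ∈ Set.Ico (0:ℝ) F.T)
    (ε : ℝ) (hε : 0 < ε) (α : ℝ) (hα : 0 < α)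
    (hlat : ∀ t ∈ Set.Ico t' F.T, δ ≤ F.c x₂ t * F.meanH x₂ t)
    (hinit : ∀ x ∈ Set.Ioc (0:ℝ) x₂, δ ≤ F.c x t' * F.meanH x t')
    (hcb : ∀ x ∈ Set.Ioc (0:ℝ) x₂, ∀ t ∈ Set.Ico t' F.T, ε ≤ F.c x t / F.b x t)
    (hgrad : ∀ x ∈ Set.Ioc (0:ℝ) x₂, ∀ t ∈ Set.Ico t' F.T,
      |F.cS x t / F.c x t - F.bS x t / F.b x t| ≤ α) :
    ∃ μ > 0, ∀ x ∈ Set.Ioc (0:ℝ) x₂, ∀ t ∈ Set.Ico t' F.T,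
      μ ≤ F.c x t * F.meanH x t :=
  ⟨min δ (ε ^ 2), by positivity, warpedBerger_cH_lower_bound_general F hBC hδ ht' hε
    (fun x hx t ht => hbs x hx.1 t ⟨ht'.1.trans ht.1, ht.2⟩) hlat hinit hcb⟩
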